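/- arXiv:1809.03673 — 2 statements merged into one kernel-verified Lean document; each statement's English description precedes it below -/
import Mathlib

section
/- The quaternary mixed sum x² + 2y² + 5(3z² − 2z) + 5(3t² − 2t) represents a nonnegative integer N (i.e., the equation x² + 2y² + 5(3z² − 2z) + 5(3t² − 2t) = N has an integer solution (x, y, z, t) ∈ ℤ⁴) if and only if N ∉ {15, 20}. In other words, the set of nonnegative integers not represented by x²+2y²+5P₈(z)+5P₈(t) is exactly {15, 20}. -/
/-!
Multiplying by `3` turns the equation into `3(x² + 2y²) + 5(3z - 1)² + 5(3t - 1)² = 3N + 10`. Fix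
`v = 3t - 1` so that `n = 3N + 10 - 5v²` is positive and odd, with `n / 5 ≡ ±1` modulo `5` if
`5 ∣ N`; such a `v` exists except for a few small `N`. It then suffices to write
`n = X² + 2Y² + 5Z²` with `3 ∤ Z`, because `3 ∣ X² + 2Y²` makes `X² + 2Y²` three times a number of
the same shape.

For the ternary form, Dirichlet's theorem and quadratic reciprocity provide a positive form of
determinant `10` that represents `n` and whose reduction modulo `5` has no zeros outside its
radical. In a Hermite–Gauss reduced form of determinant `10` other than `X² + 2Y² + 5Z²`, either
all values are even, or the form restricts to `a(X² + Y²)` with `a ∈ {1, 2}` on a coordinate plane,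
which has further zeros modulo `5` because `-1` is a square there. Hence `X² + 2Y² + 5Z²`
represents `n`, and multiplication by elements of norm `9` in `ℤ[√-5]` achieves `3 ∤ Z`.

The values `15` and `20` are missed because `5 ∣ x² + 2y²` forces `25 ∣ x² + 2y²`, and `3` and `4`
are not sums of two octagonal numbers.
-/

open Matrix NumberTheorySymbols

section ProperEquivalence

variable {ι R S : Type*} [Fintype ι] [CommRing R] [CommRing S]

/-- The quadratic form with Gram matrix `A` takes the value `n`. -/
def Represents (A : Matrix ι ι R) (n : R) : Prop :=
  ∃ v, v ⬝ᵥ A *ᵥ v = n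

/-- Every zero of the quadratic form of `A` lies in its radical; over a field of odd characteristic
this says that the form induced on the quotient by the radical is anisotropic. -/
def ZerosInRadical (A : Matrix ι ι R) : Prop :=
  ∀ v, v ⬝ᵥ A *ᵥ v = 0 → A *ᵥ v = 0

theorem dotProduct_transpose_mul_mul_mulVec (A U : Matrix ι ι R) (v : ι → R) :
    v ⬝ᵥ (Uᵀ * A * U) *ᵥ v = (U *ᵥ v) ⬝ᵥ A *ᵥ (U *ᵥ v) := by
  rw [← mulVec_mulVec, ← mulVec_mulVec, dotProduct_mulVec, vecMul_transpose]

variable [DecidableEq ι]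

/-- Proper equivalence of quadratic forms, expressed through their Gram matrices: `B` is the Gram
matrix of the form of `A` after a substitution of determinant one. -/
def ProperlyEquivalent (A B : Matrix ι ι R) : Prop :=
  ∃ U : SpecialLinearGroup ι R, B = (U : Matrix ι ι R)ᵀ * A * U

namespace ProperlyEquivalent

variable {A B C : Matrix ι ι R}

theorem refl (A : Matrix ι ι R) : ProperlyEquivalent A A :=
  ⟨1, by simp⟩

theorem trans (hAB : ProperlyEquivalent A B) (hBC : ProperlyEquivalent B C) :
    ProperlyEquivalent A C := by
  obtain ⟨U, rfl⟩ := hAB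
  obtain ⟨V, rfl⟩ := hBC
  exact ⟨U * V, by simp [Matrix.mul_assoc]⟩

theorem map (f : R →+* S) (h : ProperlyEquivalent A B) :
    ProperlyEquivalent (A.map f) (B.map f) := by
  obtain ⟨U, rfl⟩ := h
  exact ⟨SpecialLinearGroup.map f U, by simp [Matrix.map_mul, transpose_map]⟩

theorem det_eq (h : ProperlyEquivalent A B) : B.det = A.det := by
  obtain ⟨U, rfl⟩ := h
  simp

theorem represents {n : R} (h : ProperlyEquivalent A B) (hn : Represents A n) :
    Represents B n := by
  obtain ⟨U, rfl⟩ := h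
  obtain ⟨v, rfl⟩ := hn
  have hU : (U : Matrix ι ι R) * (U⁻¹ : SpecialLinearGroup ι R) = 1 := by simp [mul_adjugate]
  refine ⟨(U⁻¹ : SpecialLinearGroup ι R) *ᵥ v, ?_⟩
  rw [dotProduct_transpose_mul_mul_mulVec, mulVec_mulVec, hU, one_mulVec]

theorem zerosInRadical (h : ProperlyEquivalent A B) (hA : ZerosInRadical A) :
    ZerosInRadical B := by
  obtain ⟨U, rfl⟩ := h
  intro v hv
  rw [dotProduct_transpose_mul_mul_mulVec] at hv
  rw [← mulVec_mulVec, ← mulVec_mulVec, hA _ hv, mulVec_zero]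

theorem posDef {A B : Matrix ι ι ℤ} (h : ProperlyEquivalent A B) (hA : A.PosDef) :
    B.PosDef := by
  obtain ⟨U, rfl⟩ := h
  rw [← conjTranspose_eq_transpose_of_trivial]
  exact (IsUnit.posDef_star_left_conjugate_iff
    ((isUnit_iff_isUnit_det _).2 (by simp))).2 hA

end ProperlyEquivalent

end ProperEquivalence

theorem isSymm_of_posDef {ι : Type*} {A : Matrix ι ι ℤ} (hA : A.PosDef) : A.IsSymm := by
  have := hA.isHermitian
  rwa [IsHermitian, conjTranspose_eq_transpose_of_trivial] at this

section TernaryForms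

/-- Eliminating the first variable from the quadratic form `f` of a symmetric matrix `A` leaves
`A 0 0 * f = (A *ᵥ v) 0 ^ 2 + g`, where `g` is the quadratic form in the other variables with Gram
matrix `pivotMinor A`. -/
def pivotMinor {R : Type*} [CommRing R] (A : Matrix (Fin 3) (Fin 3) R) (i j : Fin 3) : R :=
  A 0 0 * A i j - A 0 i * A 0 j

section CommRing

variable {R : Type*} [CommRing R] {A : Matrix (Fin 3) (Fin 3) R}

theorem pivotMinor_mul_sub_sq (hA : A.IsSymm) :
    pivotMinor A 1 1 * pivotMinor A 2 2 - pivotMinor A 1 2 ^ 2 = A 0 0 * A.det := by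
  simp only [pivotMinor, det_fin_three, hA.apply 0 1, hA.apply 0 2, hA.apply 1 2]
  ring

theorem pivot_mul_pivotMinor_mul_dotProduct_mulVec (hA : A.IsSymm) (v : Fin 3 → R) :
    A 0 0 * pivotMinor A 1 1 * (v ⬝ᵥ A *ᵥ v) =
      pivotMinor A 1 1 * (A *ᵥ v) 0 ^ 2 +
        (pivotMinor A 1 1 * v 1 + pivotMinor A 1 2 * v 2) ^ 2 + A 0 0 * A.det * v 2 ^ 2 := by
  simp only [pivotMinor, det_fin_three, dotProduct, mulVec, Fin.sum_univ_three,
    hA.apply 0 1, hA.apply 0 2, hA.apply 1 2]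
  ring

theorem dotProduct_mulVec_fin_three (hA : A.IsSymm) (v : Fin 3 → R) :
    v ⬝ᵥ A *ᵥ v = A 0 0 * v 0 ^ 2 + A 1 1 * v 1 ^ 2 + A 2 2 * v 2 ^ 2 +
      2 * (A 0 1 * v 0 * v 1 + A 0 2 * v 0 * v 2 + A 1 2 * v 1 * v 2) := by
  simp only [dotProduct, mulVec, Fin.sum_univ_three, hA.apply 0 1, hA.apply 0 2, hA.apply 1 2]
  ring

theorem eq_diagonal_of_isSymm (hA : A.IsSymm) (h₀₁ : A 0 1 = 0) (h₀₂ : A 0 2 = 0)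
    (h₁₂ : A 1 2 = 0) : A = diagonal ![A 0 0, A 1 1, A 2 2] := by
  ext i j
  fin_cases i <;> fin_cases j <;> simp [h₀₁, h₀₂, h₁₂, hA.apply 0 1, hA.apply 0 2, hA.apply 1 2]

end CommRing

theorem eq_zero_of_mul_sq_add_sq_eq_zero {K : Type*} [Field K] {d x y : K} (hd : ¬ IsSquare (-d))
    (h : d * x ^ 2 + y ^ 2 = 0) : x = 0 ∧ y = 0 := by
  have hx : x = 0 := by
    by_contra hx
    refine hd ⟨y / x, ?_⟩
    field_simp
    linear_combination -h
  exact ⟨hx, by simpa [hx] using h⟩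

theorem zerosInRadical_of_not_isSquare {K : Type*} [Field K] {A : Matrix (Fin 3) (Fin 3) K}
    (hA : A.IsSymm) (hdet : A.det = 0) (hsq : ¬ IsSquare (-pivotMinor A 1 1)) :
    ZerosInRadical A := by
  intro v hv
  have hminor : pivotMinor A 1 1 ≠ 0 := fun h ↦ hsq (by simp [h])
  have hpivot : A 0 0 ≠ 0 := fun h ↦ hsq ⟨A 0 1, by simp [pivotMinor, h]⟩
  obtain ⟨hrow, hsecond⟩ := eq_zero_of_mul_sq_add_sq_eq_zero hsq
    (x := (A *ᵥ v) 0) (y := pivotMinor A 1 1 * v 1 + pivotMinor A 1 2 * v 2) <| by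
      simpa [hv, hdet] using (pivot_mul_pivotMinor_mul_dotProduct_mulVec hA v).symm
  have hrow₁ : A 0 0 * (A *ᵥ v) 1 = 0 := by
    have : A 0 0 * (A *ᵥ v) 1 = A 0 1 * (A *ᵥ v) 0 +
        (pivotMinor A 1 1 * v 1 + pivotMinor A 1 2 * v 2) := by
      simp only [pivotMinor, mulVec, dotProduct, Fin.sum_univ_three, hA.apply 0 1]
      ring
    rw [this, hrow, hsecond, mul_zero, add_zero]
  have hrow₂ : pivotMinor A 1 1 * (A 0 0 * (A *ᵥ v) 2) = 0 := by
    have : pivotMinor A 1 1 * (A 0 0 * (A *ᵥ v) 2) =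
        pivotMinor A 1 1 * A 0 2 * (A *ᵥ v) 0 +
        pivotMinor A 1 2 * (pivotMinor A 1 1 * v 1 + pivotMinor A 1 2 * v 2) +
        A 0 0 * A.det * v 2 := by
      simp only [pivotMinor, mulVec, dotProduct, det_fin_three, Fin.sum_univ_three,
        hA.apply 0 1, hA.apply 0 2, hA.apply 1 2]
      ring
    simp [this, hrow, hsecond, hdet]
  ext i
  fin_cases i
  · exact hrow
  · exact (mul_eq_zero.1 hrow₁).resolve_left hpivot
  · exact (mul_eq_zero.1 ((mul_eq_zero.1 hrow₂).resolve_left hminor)).resolve_left hpivot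

variable {A B : Matrix (Fin 3) (Fin 3) ℤ}

theorem posDef_of_pos (hA : A.IsSymm) (hpivot : 0 < A 0 0) (hminor : 0 < pivotMinor A 1 1)
    (hdet : 0 < A.det) : A.PosDef := by
  refine .of_dotProduct_mulVec_pos ?_ fun v hv ↦ ?_
  · rwa [IsHermitian, conjTranspose_eq_transpose_of_trivial]
  rw [star_trivial]
  refine pos_of_mul_pos_right (a := A 0 0 * pivotMinor A 1 1) ?_ (by positivity)
  rw [pivot_mul_pivotMinor_mul_dotProduct_mulVec hA]
  by_contra! hle
  have h₂ : v 2 = 0 := by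
    by_contra h₂
    have : 0 < A 0 0 * A.det * v 2 ^ 2 := by positivity
    nlinarith [sq_nonneg (pivotMinor A 1 1 * v 1 + pivotMinor A 1 2 * v 2),
      mul_nonneg hminor.le (sq_nonneg ((A *ᵥ v) 0))]
  have h₁ : v 1 = 0 := by
    by_contra h₁
    have : 0 < (pivotMinor A 1 1 * v 1) ^ 2 := by positivity
    rw [h₂] at hle
    nlinarith [mul_nonneg hminor.le (sq_nonneg ((A *ᵥ v) 0))]
  have h₀ : v 0 ≠ 0 := fun h₀ ↦ hv (by ext i; fin_cases i <;> assumption)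
  have hrow : (A *ᵥ v) 0 = A 0 0 * v 0 := by
    simp [mulVec, dotProduct, Fin.sum_univ_three, h₁, h₂]
  have : 0 < pivotMinor A 1 1 * (A 0 0 * v 0) ^ 2 := by positivity
  simp only [h₁, h₂, hrow] at hle
  linarith

theorem pivotMinor_pos (hA : A.PosDef) : 0 < pivotMinor A 1 1 := by
  have hpivot : 0 < A 0 0 := hA.diag_pos
  have hne : ![-A 0 1, A 0 0, 0] ≠ 0 := fun h ↦ hpivot.ne' (by simpa using congrFun h 1)
  have hpos := hA.dotProduct_mulVec_pos hne
  rw [star_trivial, dotProduct_mulVec_fin_three (isSymm_of_posDef hA)] at hpos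
  refine pos_of_mul_pos_right (a := A 0 0) ?_ hpivot.le
  calc 0 < _ := hpos
    _ = A 0 0 * pivotMinor A 1 1 := by
      simp only [pivotMinor, cons_val]
      ring

/-- The Hermite–Gauss reduction conditions: `B 0 0` and `pivotMinor B 1 1` are minimal under
exchanging variables, and the off-diagonal entries of `B` and of `pivotMinor B` are at most half
the preceding diagonal entry. -/
structure IsReducedTernary (B : Matrix (Fin 3) (Fin 3) ℤ) : Prop where
  diag_le : B 0 0 ≤ B 1 1
  pivotMinor_le : pivotMinor B 1 1 ≤ pivotMinor B 2 2
  abs_entry_one_le : |2 * B 0 1| ≤ B 0 0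
  abs_entry_two_le : |2 * B 0 2| ≤ B 0 0
  abs_pivotMinor_le : |2 * pivotMinor B 1 2| ≤ pivotMinor B 1 1

theorem exists_abs_two_mul_add_mul_le {a : ℤ} (ha : 0 < a) (b : ℤ) :
    ∃ k, |2 * (b + k * a)| ≤ a := by
  refine ⟨-((2 * b + a) / (2 * a)), abs_le.2 ?_⟩
  have hdiv := Int.mul_ediv_add_emod (2 * b + a) (2 * a)
  have hnonneg := Int.emod_nonneg (2 * b + a) (b := 2 * a) (by positivity)
  have hlt := Int.emod_lt_of_pos (2 * b + a) (b := 2 * a) (by positivity)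
  constructor <;> linarith

theorem exists_abs_offDiag_le (hA : A.PosDef) :
    ∃ B, ProperlyEquivalent A B ∧ B 0 0 = A 0 0 ∧ pivotMinor B 1 1 = pivotMinor A 1 1 ∧
      |2 * B 0 1| ≤ B 0 0 ∧ |2 * B 0 2| ≤ B 0 0 ∧
      |2 * pivotMinor B 1 2| ≤ pivotMinor B 1 1 := by
  have hsymm := isSymm_of_posDef hA
  obtain ⟨m, hm⟩ := exists_abs_two_mul_add_mul_le (pivotMinor_pos hA) (pivotMinor A 1 2)
  obtain ⟨k, hk⟩ := exists_abs_two_mul_add_mul_le (hA.diag_pos (i := 0)) (A 0 1)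
  obtain ⟨l, hl⟩ := exists_abs_two_mul_add_mul_le (hA.diag_pos (i := 0)) (A 0 2 + m * A 0 1)
  let U : Matrix (Fin 3) (Fin 3) ℤ := !![1, k, l; 0, 1, m; 0, 0, 1]
  let B := Uᵀ * A * U
  have h₀₀ : B 0 0 = A 0 0 := by
    simp [B, U, mul_apply, Fin.sum_univ_three]
  have h₀₁ : B 0 1 = A 0 1 + k * A 0 0 := by
    simp only [B, U, mul_apply, transpose_apply, of_apply, cons_val, Fin.sum_univ_three]
    ring
  have h₀₂ : B 0 2 = A 0 2 + m * A 0 1 + l * A 0 0 := by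
    simp only [B, U, mul_apply, transpose_apply, of_apply, cons_val, Fin.sum_univ_three]
    ring
  have h₁₁ : pivotMinor B 1 1 = pivotMinor A 1 1 := by
    simp only [pivotMinor, B, U, mul_apply, transpose_apply, of_apply, cons_val,
      Fin.sum_univ_three, hsymm.apply 0 1]
    ring
  have h₁₂ : pivotMinor B 1 2 = pivotMinor A 1 2 + m * pivotMinor A 1 1 := by
    simp only [pivotMinor, B, U, mul_apply, transpose_apply, of_apply, cons_val,
      Fin.sum_univ_three, hsymm.apply 0 1]
    ring
  refine ⟨B, ⟨⟨U, by simp [U, det_fin_three]⟩, rfl⟩, h₀₀, h₁₁, ?_, ?_, ?_⟩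
  · rwa [h₀₁, h₀₀]
  · rwa [h₀₂, h₀₀]
  · rwa [h₁₂, h₁₁]

theorem exists_swap_first_two (A : Matrix (Fin 3) (Fin 3) ℤ) :
    ∃ B, ProperlyEquivalent A B ∧ B 0 0 = A 1 1 :=
  ⟨_, ⟨⟨!![0, -1, 0; 1, 0, 0; 0, 0, 1], by simp [det_fin_three]⟩, rfl⟩,
    by simp [mul_apply, Fin.sum_univ_three]⟩

theorem exists_swap_last_two (A : Matrix (Fin 3) (Fin 3) ℤ) :
    ∃ B, ProperlyEquivalent A B ∧ B 0 0 = A 0 0 ∧ pivotMinor B 1 1 = pivotMinor A 2 2 :=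
  ⟨_, ⟨⟨!![1, 0, 0; 0, 0, -1; 0, 1, 0], by simp [det_fin_three]⟩, rfl⟩,
    by simp [mul_apply, Fin.sum_univ_three],
    by simp [pivotMinor, mul_apply, Fin.sum_univ_three]⟩

theorem exists_isReducedTernary (hA : A.PosDef) :
    ∃ B, ProperlyEquivalent A B ∧ IsReducedTernary B := by
  obtain ⟨M, hAM, hmin⟩ := exists_minimalFor_of_wellFoundedLT (ProperlyEquivalent A)
    (fun B ↦ toLex ((B 0 0).toNat, (pivotMinor B 1 1).toNat)) ⟨A, .refl A⟩
  obtain ⟨B, hMB, hdiag, hminor, habs₁, habs₂, habsMinor⟩ := exists_abs_offDiag_le (hAM.posDef hA)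
  have hAB := hAM.trans hMB
  have hB := hAB.posDef hA
  have hlex : ∀ {C}, ProperlyEquivalent B C →
      (B 0 0).toNat < (C 0 0).toNat ∨ (B 0 0).toNat = (C 0 0).toNat ∧
        (pivotMinor B 1 1).toNat ≤ (pivotMinor C 1 1).toNat := by
    intro C hBC
    have := (le_total _ _).elim id (hmin (hAB.trans hBC))
    simpa only [hdiag, hminor, Prod.Lex.toLex_le_toLex] using this
  refine ⟨B, hAB, ?_, ?_, habs₁, habs₂, habsMinor⟩
  · obtain ⟨C, hBC, hC⟩ := exists_swap_first_two B
    have := hlex hBC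
    have := hB.diag_pos (i := 1)
    omega
  · obtain ⟨C, hBC, hC, hC'⟩ := exists_swap_last_two B
    have := hlex hBC
    have := pivotMinor_pos ((hAB.trans hBC).posDef hA)
    omega

namespace IsReducedTernary

theorem three_mul_diag_sq_le (hred : IsReducedTernary B) :
    3 * B 0 0 ^ 2 ≤ 4 * pivotMinor B 1 1 := by
  have hpivot : 0 ≤ B 0 0 := (abs_nonneg _).trans hred.abs_entry_one_le
  have hsq := sq_le_sq.2 (hred.abs_entry_one_le.trans (le_abs_self _))
  have hmul := mul_le_mul_of_nonneg_left hred.diag_le hpivot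
  unfold pivotMinor
  linarith

theorem three_mul_pivotMinor_sq_le (hred : IsReducedTernary B) (hsymm : B.IsSymm) :
    3 * pivotMinor B 1 1 ^ 2 ≤ 4 * (B 0 0 * B.det) := by
  have hminor : 0 ≤ pivotMinor B 1 1 := (abs_nonneg _).trans hred.abs_pivotMinor_le
  have hsq := sq_le_sq.2 (hred.abs_pivotMinor_le.trans (le_abs_self _))
  have hmul := mul_le_mul_of_nonneg_left hred.pivotMinor_le hminor
  rw [← pivotMinor_mul_sub_sq hsymm]
  linarith

theorem diag_cube_le (hred : IsReducedTernary B) (hB : B.PosDef) :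
    27 * B 0 0 ^ 3 ≤ 64 * B.det := by
  have hpivot : 0 < B 0 0 := hB.diag_pos
  have hminor := hred.three_mul_pivotMinor_sq_le (isSymm_of_posDef hB)
  refine le_of_mul_le_mul_left ?_ hpivot
  calc B 0 0 * (27 * B 0 0 ^ 3) = 3 * (3 * B 0 0 ^ 2) ^ 2 := by ring
    _ ≤ 3 * (4 * pivotMinor B 1 1) ^ 2 := by
      gcongr 3 * ?_ ^ 2; exact hred.three_mul_diag_sq_le
    _ = 16 * (3 * pivotMinor B 1 1 ^ 2) := by ring
    _ ≤ 16 * (4 * (B 0 0 * B.det)) := by gcongr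
    _ = B 0 0 * (64 * B.det) := by ring

theorem eq_diagonal_or_of_diag_eq_one (hred : IsReducedTernary B) (hsymm : B.IsSymm)
    (hdet : B.det = 10) (hpivot : B 0 0 = 1) :
    B = diagonal ![1, 2, 5] ∨ B 0 0 = B 1 1 ∧ B 0 1 = 0 := by
  have h₀₁ : B 0 1 = 0 := by
    have := abs_le.1 hred.abs_entry_one_le
    omega
  have h₀₂ : B 0 2 = 0 := by
    have := abs_le.1 hred.abs_entry_two_le
    omega
  have hminor (i j : Fin 3) (hi : B 0 i = 0) : pivotMinor B i j = B i j := by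
    simp [pivotMinor, hpivot, hi]
  have hsq := hred.three_mul_pivotMinor_sq_le hsymm
  have hcond := pivotMinor_mul_sub_sq hsymm
  have hoff := abs_le.1 hred.abs_pivotMinor_le
  rw [hminor 1 1 h₀₁, hpivot, hdet] at hsq
  rw [hminor 1 1 h₀₁, hminor 1 2 h₀₁, hminor 2 2 h₀₂, hpivot, hdet] at hcond
  rw [hminor 1 1 h₀₁, hminor 1 2 h₀₁] at hoff
  have hone : 1 ≤ B 1 1 := hpivot ▸ hred.diag_le
  have hthree : B 1 1 ≤ 3 := by nlinarith
  have hlower : -1 ≤ B 1 2 := by omega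
  have hupper : B 1 2 ≤ 1 := by omega
  interval_cases hb : B 1 1
  · exact .inr ⟨hpivot, h₀₁⟩
  · left
    have h₁₂ : B 1 2 = 0 := by interval_cases B 1 2 <;> omega
    have h₂₂ : B 2 2 = 5 := by rw [h₁₂] at hcond; omega
    rw [eq_diagonal_of_isSymm hsymm h₀₁ h₀₂ h₁₂, hpivot, hb, h₂₂]
  · interval_cases B 1 2 <;> omega

theorem even_or_of_diag_eq_two (hred : IsReducedTernary B) (hsymm : B.IsSymm)
    (hdet : B.det = 10) (hpivot : B 0 0 = 2) :
    (∀ i, Even (B i i)) ∨ B 0 0 = B 1 1 ∧ B 0 1 = 0 := by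
  have hlower := hred.three_mul_diag_sq_le
  have hupper := hred.three_mul_pivotMinor_sq_le hsymm
  have hcond := pivotMinor_mul_sub_sq hsymm
  have hle := hred.pivotMinor_le
  obtain ⟨hoff, hoff'⟩ := abs_le.1 hred.abs_pivotMinor_le
  obtain ⟨h₀₁, h₀₁'⟩ := abs_le.1 hred.abs_entry_one_le
  obtain ⟨h₀₂, h₀₂'⟩ := abs_le.1 hred.abs_entry_two_le
  rw [hpivot] at hlower hupper hcond h₀₁ h₀₁' h₀₂ h₀₂'
  rw [hdet] at hupper hcond
  have hminor₁ : pivotMinor B 1 1 = 2 * B 1 1 - B 0 1 ^ 2 := by rw [pivotMinor, hpivot]; ring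
  have hminor₂ : pivotMinor B 2 2 = 2 * B 2 2 - B 0 2 ^ 2 := by rw [pivotMinor, hpivot]; ring
  have hthree : 3 ≤ pivotMinor B 1 1 := by omega
  have hfive : pivotMinor B 1 1 ≤ 5 := by nlinarith
  have hoffLower : -2 ≤ pivotMinor B 1 2 := by omega
  have hoffUpper : pivotMinor B 1 2 ≤ 2 := by omega
  have htLower : -1 ≤ B 0 1 := by omega
  have htUpper : B 0 1 ≤ 1 := by omega
  have hsLower : -1 ≤ B 0 2 := by omega
  have hsUpper : B 0 2 ≤ 1 := by omega
  interval_cases pivotMinor B 1 1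
  · left
    have hseven : pivotMinor B 2 2 = 7 := by interval_cases pivotMinor B 1 2 <;> omega
    have h₁₁ : B 1 1 = 2 := by interval_cases B 0 1 <;> omega
    have h₂₂ : B 2 2 = 4 := by interval_cases B 0 2 <;> omega
    intro i
    fin_cases i
    · exact ⟨1, hpivot⟩
    · exact ⟨1, h₁₁⟩
    · exact ⟨2, h₂₂⟩
  · right
    interval_cases B 0 1 <;> omega
  · interval_cases pivotMinor B 1 2 <;> omega

end IsReducedTernary

theorem not_zerosInRadical_of_isSquare_neg_one {R : Type*} [CommRing R]
    {A : Matrix (Fin 3) (Fin 3) R} (hsq : IsSquare (-1 : R)) (hA : A.IsSymm)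
    (hdiag : A 0 0 = A 1 1) (h₀₁ : A 0 1 = 0) (hne : A 0 0 ≠ 0) : ¬ ZerosInRadical A := by
  obtain ⟨i, hi⟩ := hsq
  intro hzeros
  have hker := hzeros ![1, i, 0] <| by
    simp only [dotProduct_mulVec_fin_three hA, ← hdiag, h₀₁, cons_val]
    linear_combination -A 0 0 * hi
  exact hne (by simpa [mulVec, dotProduct, Fin.sum_univ_three, h₀₁] using congrFun hker 0)

theorem even_of_represents {n : ℤ} (hA : A.IsSymm) (heven : ∀ i, Even (A i i))
    (hn : Represents A n) : Even n := by
  obtain ⟨v, rfl⟩ := hn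
  rw [dotProduct_mulVec_fin_three hA]
  simp [heven, parity_simps]

theorem represents_diagonal_of_odd {n : ℤ} (hA : A.PosDef) (hdet : A.det = 10)
    (hzeros : ZerosInRadical (A.map (Int.castRingHom (ZMod 5)))) (hodd : Odd n)
    (hn : Represents A n) : Represents (diagonal ![1, 2, 5]) n := by
  obtain ⟨B, hAB, hred⟩ := exists_isReducedTernary hA
  have hB := hAB.posDef hA
  have hsymm := isSymm_of_posDef hB
  have hdetB := hAB.det_eq.trans hdet
  have hnB := hAB.represents hn
  have hpos : 0 < B 0 0 := hB.diag_pos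
  have hle : B 0 0 ≤ 2 := by
    have := hred.diag_cube_le hB
    by_contra! hlt
    have : 3 ^ 3 ≤ B 0 0 ^ 3 := by gcongr; exact hlt
    omega
  have hcases : B = diagonal ![1, 2, 5] ∨ (∀ i, Even (B i i)) ∨ B 0 0 = B 1 1 ∧ B 0 1 = 0 := by
    obtain hone | htwo : B 0 0 = 1 ∨ B 0 0 = 2 := by omega
    · exact (hred.eq_diagonal_or_of_diag_eq_one hsymm hdetB hone).imp_right .inr
    · exact .inr (hred.even_or_of_diag_eq_two hsymm hdetB htwo)
  obtain rfl | heven | ⟨hdiag, h₀₁⟩ := hcases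
  · exact hnB
  · exact absurd (even_of_represents hsymm heven hnB) (Int.not_even_iff_odd.2 hodd)
  · refine absurd ((hAB.map _).zerosInRadical hzeros)
      (not_zerosInRadical_of_isSquare_neg_one ⟨2, rfl⟩ (hsymm.map _) ?_ ?_ ?_)
    · simp [hdiag]
    · simp [h₀₁]
    · have : ¬ (5 : ℤ) ∣ B 0 0 := by omega
      simpa [ZMod.intCast_zmod_eq_zero_iff_dvd] using this

theorem not_isSquare_neg_intCast_zmod_five {m : ℤ} (h : m % 5 = 2 ∨ m % 5 = 3) :
    ¬ IsSquare (-(m : ZMod 5)) := by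
  rw [← ZMod.intCast_mod m 5]
  rcases h with h | h <;> rw [Nat.cast_ofNat, h] <;> decide

theorem represents_diagonal_of_pivotMinor_emod_five {n : ℤ} (hA : A.IsSymm) (hpivot : 0 < A 0 0)
    (hminor : 0 < pivotMinor A 1 1) (hdet : A.det = 10)
    (h5 : pivotMinor A 1 1 % 5 = 2 ∨ pivotMinor A 1 1 % 5 = 3) (hodd : Odd n)
    (hn : Represents A n) : Represents (diagonal ![1, 2, 5]) n := by
  have : Fact (Nat.Prime 5) := ⟨Nat.prime_five⟩
  refine represents_diagonal_of_odd (posDef_of_pos hA hpivot hminor (by omega)) hdet ?_ hodd hn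
  refine zerosInRadical_of_not_isSquare (hA.map _) ?_ ?_
  · rw [← RingHom.mapMatrix_apply, ← RingHom.map_det, hdet]
    rfl
  · have hmap : pivotMinor (A.map (Int.castRingHom (ZMod 5))) 1 1 =
        ((pivotMinor A 1 1 : ℤ) : ZMod 5) := by
      simp [pivotMinor]
    rw [hmap]
    exact not_isSquare_neg_intCast_zmod_five h5

end TernaryForms

section PrimesAndReciprocity

theorem isSquare_neg_of_jacobiSym_eq_one {p b : ℕ} [Fact p.Prime] (hp : p % 4 = 1) (hb : Odd b)
    (h : J(p | b) = 1) : IsSquare ((-b : ℤ) : ZMod p) := by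
  refine ZMod.isSquare_of_jacobiSym_eq_one ?_
  have hodd : Odd p := Nat.odd_iff.2 (by omega)
  rw [jacobiSym.neg _ hodd, ZMod.χ₄_nat_one_mod_four hp, one_mul,
    ← jacobiSym.quadratic_reciprocity_one_mod_four hp hb, h]

theorem jacobiSym_neg_ten {b : ℕ} (h8 : b % 8 = 5 ∨ b % 8 = 7) (h5 : b % 5 = 2 ∨ b % 5 = 3) :
    J(-10 | b) = 1 := by
  have hodd : Odd b := Nat.odd_iff.2 (by omega)
  have hneg_two : J(-2 | b) = -1 := by
    rw [jacobiSym.mod_right _ hodd]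
    change J(-2 | b % 8) = -1
    rcases h8 with h | h <;> rw [h] <;> norm_num
  have hfive : J(5 | b) = -1 := by
    rw [show (5 : ℤ) = (5 : ℕ) from rfl, jacobiSym.quadratic_reciprocity_one_mod_four rfl hodd,
      jacobiSym.mod_left]
    norm_cast
    rcases h5 with h | h <;> rw [h] <;> norm_num <;> rfl
  rw [show (-10 : ℤ) = -2 * 5 by norm_num, jacobiSym.mul_left, hneg_two, hfive]
  norm_num

theorem jacobiSym_eq_of_dvd_sq_mul_sub {b : ℕ} {c p s : ℤ} (hs : IsCoprime s b)
    (h : (b : ℤ) ∣ s ^ 2 * p - c) : J(p | b) = J(c | b) := by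
  have hmod : s ^ 2 * p ≡ c [ZMOD b] := (Int.modEq_iff_dvd.2 h).symm
  rw [← jacobiSym.mod_left' hmod, jacobiSym.mul_left,
    jacobiSym.sq_one' (Int.isCoprime_iff_gcd_eq_one.1 hs), one_mul]

theorem represents_diagonal_of_prime {n s : ℤ} {p b : ℕ} (hp : p.Prime) (hp4 : p % 4 = 1)
    (h8 : b % 8 = 5 ∨ b % 8 = 7) (h5 : b % 5 = 2 ∨ b % 5 = 3) (hs : IsCoprime s b)
    (hnb : n * b = s ^ 2 * p + 10) (hodd : Odd n) : Represents (diagonal ![1, 2, 5]) n := by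
  have := Fact.mk hp
  have hjacobi : J(p | b) = 1 :=
    (jacobiSym_eq_of_dvd_sq_mul_sub hs ⟨n, by linear_combination -hnb⟩).trans
      (jacobiSym_neg_ten h8 h5)
  obtain ⟨t, a, hta⟩ : ∃ t a : ℤ, t ^ 2 + b = p * a := by
    obtain ⟨w, hw⟩ := isSquare_neg_of_jacobiSym_eq_one hp4 (Nat.odd_iff.2 (by omega)) hjacobi
    obtain ⟨t, rfl⟩ := ZMod.intCast_surjective w
    refine ⟨t, (ZMod.intCast_zmod_eq_zero_iff_dvd _ p).1 ?_⟩
    push_cast at hw ⊢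
    linear_combination -hw
  have hbpos : (0 : ℤ) < b := by omega
  have hapos : 0 < a := by
    refine pos_of_mul_pos_right (a := (p : ℤ)) ?_ (by positivity)
    rw [← hta]
    positivity
  -- This matrix has determinant `n * b - s ^ 2 * p = 10` and takes the value `n` at `(0, 0, 1)`.
  have hminor : pivotMinor !![a, t, s; t, p, 0; s, 0, n] 1 1 = b := by
    simp only [pivotMinor, of_apply, cons_val]
    linear_combination -hta
  refine represents_diagonal_of_pivotMinor_emod_five (A := !![a, t, s; t, p, 0; s, 0, n])
    ?_ hapos (hminor ▸ hbpos) ?_ (by rw [hminor]; omega) hodd ⟨Pi.single 2 1, by simp⟩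
  · ext i j
    fin_cases i <;> fin_cases j <;> rfl
  · simp only [det_fin_three, of_apply, cons_val]
    linear_combination hnb - n * hta

theorem isCoprime_ten {c : ℤ} (h2 : c % 2 = 1) (h5 : c % 5 ≠ 0) : IsCoprime c 10 := by
  have hfive : Prime (5 : ℤ) := Int.prime_ofNat_iff.2 Nat.prime_five
  rw [show (10 : ℤ) = 2 * 5 by norm_num]
  exact (IsCoprime.mul_left (Int.prime_two.coprime_iff_not_dvd.2 (by omega))
    (hfive.coprime_iff_not_dvd.2 (by omega))).symm

theorem exists_prime_mul_eq_mul_add {e m b₀ p₀ s : ℤ} (he : e ≠ 0) (hm : m ≠ 0)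
    (hcop : IsCoprime p₀ (4 * e * m)) (h : m * b₀ = s * p₀ + e) :
    ∃ (p : ℕ) (k : ℤ), p.Prime ∧ p = p₀ + 4 * e * m * k ∧
      m * (b₀ + 4 * (s * e) * k) = s * p + e := by
  have hcop' : IsCoprime p₀ ((4 * e * m).natAbs : ℤ) := by
    rwa [Int.natCast_natAbs, IsCoprime.abs_right_iff]
  obtain ⟨p, -, hp, hmod⟩ := Nat.forall_exists_prime_gt_and_zmodEq 0
    (Int.natAbs_ne_zero.2 (by positivity)) hcop'
  obtain ⟨k, hk⟩ := Int.natAbs_dvd.1 hmod.symm.dvd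
  have hpk : (p : ℤ) = p₀ + 4 * e * m * k := by linear_combination hk
  exact ⟨p, k, hp, hpk, by rw [hpk]; linear_combination h⟩

theorem isCoprime_four_mul_mul_of_mul_eq_mul_add {e m b₀ p₀ s : ℤ} (hme : IsCoprime m e)
    (hbe : IsCoprime b₀ e) (hp : p₀ % 4 = 1) (h : m * b₀ = s * p₀ + e) :
    IsCoprime p₀ (4 * e * m) := by
  have hpfour : IsCoprime p₀ 4 := ⟨1, -(p₀ / 4), by omega⟩
  have hpe : IsCoprime p₀ e := by
    have : IsCoprime (s * p₀ + e) e := h ▸ hme.mul_left hbe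
    exact (IsCoprime.of_add_mul_right_left (z := 1) (by simpa using this)).of_mul_left_right
  have hpm : IsCoprime p₀ m := by
    obtain ⟨u, v, huv⟩ := hme
    exact ⟨-v * s, u + v * b₀, by linear_combination huv + v * h⟩
  exact (hpfour.mul_right hpe).mul_right hpm

theorem represents_diagonal_of_mul_eq_mul_add {e m b₀ p₀ s : ℤ} (hse : s * e = 10) (hs : 0 < s)
    (hm : 0 < m) (hodd : Odd (s * m)) (hme : IsCoprime m e) (hp : p₀ % 4 = 1)
    (h8 : b₀ % 8 = 5 ∨ b₀ % 8 = 7) (h5 : b₀ % 5 = 2 ∨ b₀ % 5 = 3) (h : m * b₀ = s * p₀ + e) :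
    Represents (diagonal ![1, 2, 5]) (s * m) := by
  have hepos : 0 < e := by nlinarith
  have hbe : IsCoprime b₀ e :=
    (isCoprime_ten (by omega) (by omega)).of_isCoprime_of_dvd_right ⟨s, by linarith⟩
  obtain ⟨p, k, hprime, hpk, hb⟩ := exists_prime_mul_eq_mul_add hepos.ne' hm.ne'
    (isCoprime_four_mul_mul_of_mul_eq_mul_add hme hbe hp h) h
  rw [hse] at hb
  have hbpos : 0 < b₀ + 4 * 10 * k :=
    pos_of_mul_pos_right (a := m) (by rw [hb]; positivity) hm.le
  obtain ⟨b, hbk⟩ := Int.eq_ofNat_of_zero_le hbpos.le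
  have hp4 : p % 4 = 1 := by
    have : (p : ℤ) = p₀ + 4 * (e * m * k) := by rw [hpk]; ring
    omega
  refine represents_diagonal_of_prime (s := s) (b := b) hprime hp4 (by omega) (by omega) ?_ ?_ hodd
  · exact ((isCoprime_ten (by omega) (by omega)).of_isCoprime_of_dvd_right ⟨e, hse.symm⟩).symm
  · rw [← hbk]
    linear_combination s * hb + hse

theorem represents_diagonal_of_not_five_dvd {n : ℤ} (hn : 0 < n) (hodd : Odd n)
    (h5 : ¬ 5 ∣ n) : Represents (diagonal ![1, 2, 5]) n := by
  have h2 := Int.odd_iff.1 hodd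
  obtain ⟨b₀, hb₀, h4⟩ : ∃ b₀ : ℤ, (b₀ = 7 ∨ b₀ = 13) ∧ (n * b₀) % 4 = 3 := by
    obtain h | h : n % 4 = 1 ∨ n % 4 = 3 := by omega
    · exact ⟨7, by simp, by omega⟩
    · exact ⟨13, by simp, by omega⟩
  rw [← one_mul n] at hodd ⊢
  exact represents_diagonal_of_mul_eq_mul_add (e := 10) (b₀ := b₀) (p₀ := n * b₀ - 10) (by norm_num)
    (by norm_num) hn hodd (isCoprime_ten h2 (by omega)) (by omega) (by omega) (by omega) (by ring)

theorem represents_diagonal_five_mul {m : ℤ} (hm : 0 < m) (hodd : Odd m)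
    (h5 : m % 5 = 1 ∨ m % 5 = 4) : Represents (diagonal ![1, 2, 5]) (5 * m) := by
  have h2 := Int.odd_iff.1 hodd
  obtain ⟨b₀, hb₀, h4, hmb⟩ : ∃ b₀ : ℤ, (b₀ = 7 ∨ b₀ = 13 ∨ b₀ = 23 ∨ b₀ = 37) ∧
      (m * b₀) % 4 = 3 ∧ (m * b₀) % 5 = 2 := by
    obtain h | h : m % 4 = 1 ∨ m % 4 = 3 := by omega
    · rcases h5 with h5 | h5
      · exact ⟨7, by simp, by omega, by omega⟩
      · exact ⟨23, by simp, by omega, by omega⟩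
    · rcases h5 with h5 | h5
      · exact ⟨37, by simp, by omega, by omega⟩
      · exact ⟨13, by simp, by omega, by omega⟩
  refine represents_diagonal_of_mul_eq_mul_add (s := 5) (e := 2) (b₀ := b₀) (p₀ := (m * b₀ - 2) / 5)
    (by norm_num) (by norm_num) hm (Odd.mul ⟨2, rfl⟩ hodd) ?_ (by omega) (by omega) (by omega)
    (by omega)
  exact (Int.prime_two.coprime_iff_not_dvd.2 (by omega)).symm

end PrimesAndReciprocity

section AvoidingThree

-- Multiply `x + z√-5` by `2 + √-5` or its conjugate, both of norm `9`; the two new `√-5`-parts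
-- cannot both be divisible by `3`.
theorem exists_eq_nine_mul_of_not_three_dvd {x z : ℤ} (h : ¬ (3 ∣ x ∧ 3 ∣ z)) :
    ∃ x' z' : ℤ, x' ^ 2 + 5 * z' ^ 2 = 9 * (x ^ 2 + 5 * z ^ 2) ∧ ¬ 3 ∣ z' := by
  by_cases hdvd : 3 ∣ x + 2 * z
  · exact ⟨2 * x + 5 * z, -x + 2 * z, by ring, by omega⟩
  · exact ⟨2 * x - 5 * z, x + 2 * z, by ring, hdvd⟩

theorem exists_eq_nine_mul_of_ne_zero (x z : ℤ) (h : ¬ (x = 0 ∧ z = 0)) :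
    ∃ x' z' : ℤ, x' ^ 2 + 5 * z' ^ 2 = 9 * (x ^ 2 + 5 * z ^ 2) ∧ ¬ 3 ∣ z' := by
  by_cases hdvd : 3 ∣ x ∧ 3 ∣ z
  · obtain ⟨⟨x, rfl⟩, z, rfl⟩ := hdvd
    obtain ⟨x₁, z₁, h₁, hz₁⟩ := exists_eq_nine_mul_of_ne_zero x z (by omega)
    obtain ⟨x₂, z₂, h₂, hz₂⟩ := exists_eq_nine_mul_of_not_three_dvd (x := x₁) (z := z₁)
      fun h ↦ hz₁ h.2
    exact ⟨x₂, z₂, by linear_combination h₂ + 9 * h₁, hz₂⟩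
  · exact exists_eq_nine_mul_of_not_three_dvd hdvd
termination_by x.natAbs + z.natAbs

theorem three_dvd_of_sq_add_two_mul_sq_emod {x y : ℤ} (h : (x ^ 2 + 2 * y ^ 2) % 3 = 2) :
    3 ∣ x := by
  have hsq (w : ℤ) : 3 ∣ w ∨ w ^ 2 % 3 = 1 := by
    obtain hw | hw | hw : w % 3 = 0 ∨ w % 3 = 1 ∨ w % 3 = 2 := by omega
    · exact .inl (by omega)
    all_goals simp [pow_two, Int.mul_emod, hw]
  have := hsq x
  obtain ⟨y, rfl⟩ | hy := hsq y
  · ring_nf at h; omega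
  · omega

theorem exists_not_three_dvd_of_represents {n : ℤ} (hodd : Odd n) (h3 : n % 3 = 2)
    (hn : Represents (diagonal ![1, 2, 5]) n) :
    ∃ x y z : ℤ, x ^ 2 + 2 * y ^ 2 + 5 * z ^ 2 = n ∧ ¬ 3 ∣ z := by
  obtain ⟨v, hv⟩ := hn
  obtain ⟨x, y, z, hxyz⟩ : ∃ x y z : ℤ, x ^ 2 + 2 * y ^ 2 + 5 * z ^ 2 = n :=
    ⟨v 0, v 1, v 2, by
      rw [← hv, dotProduct_mulVec_fin_three (isSymm_diagonal _)]; simp⟩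
  by_cases hz : 3 ∣ z
  · obtain ⟨z, rfl⟩ := hz
    obtain ⟨x, rfl⟩ := three_dvd_of_sq_add_two_mul_sq_emod (x := x) (y := y) <| by
      have : (3 * z) ^ 2 = 3 * (3 * z ^ 2) := by ring
      omega
    have hne : ¬ (x = 0 ∧ z = 0) := by
      rintro ⟨rfl, rfl⟩
      refine Int.not_even_iff_odd.2 hodd ⟨y ^ 2, ?_⟩
      linear_combination -hxyz
    obtain ⟨x', z', h, hz'⟩ := exists_eq_nine_mul_of_ne_zero x z hne
    exact ⟨x', y, z', by linear_combination hxyz + h, hz'⟩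
  · exact ⟨x, y, z, hxyz, hz⟩

end AvoidingThree

section MixedSums

/-- The generalized octagonal number `P₈(x)`. -/
def octagonal (x : ℤ) : ℤ := 3 * x ^ 2 - 2 * x

/-- `N` is represented by `x² + 2y² + 5P₈(z) + 5P₈(t)`. -/
def IsMixedSum (N : ℤ) : Prop :=
  ∃ x y z t : ℤ, x ^ 2 + 2 * y ^ 2 + 5 * octagonal z + 5 * octagonal t = N

theorem exists_three_mul_octagonal_eq {u : ℤ} (hu : ¬ 3 ∣ u) :
    ∃ z, 3 * octagonal z = u ^ 2 - 1 := by
  obtain ⟨z, hz | hz⟩ : ∃ z, u = 3 * z - 1 ∨ u = -(3 * z - 1) := by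
    obtain h | h : u % 3 = 2 ∨ u % 3 = 1 := by omega
    · exact ⟨(u + 1) / 3, by omega⟩
    · exact ⟨(1 - u) / 3, by omega⟩
  all_goals exact ⟨z, by rw [octagonal, hz]; ring⟩

theorem exists_eq_three_mul_sq_add_two_mul_sq {x y : ℤ} (h : 3 ∣ x ^ 2 + 2 * y ^ 2) :
    ∃ a b : ℤ, x ^ 2 + 2 * y ^ 2 = 3 * (a ^ 2 + 2 * b ^ 2) := by
  have hprod : 3 ∣ (x - y) * (x + y) := by
    have : (x - y) * (x + y) = x ^ 2 + 2 * y ^ 2 - 3 * y ^ 2 := by ring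
    omega
  rcases Int.prime_three.dvd_or_dvd hprod with ⟨w, hw⟩ | ⟨w, hw⟩
  · obtain rfl : x = y + 3 * w := by linarith
    exact ⟨y + w, w, by ring⟩
  · obtain rfl : x = -y + 3 * w := by linarith
    exact ⟨-y + w, w, by ring⟩

theorem isMixedSum_of_represents {N v : ℤ} (hv : ¬ 3 ∣ v) (hodd : Odd (3 * N + 10 - 5 * v ^ 2))
    (h : Represents (diagonal ![1, 2, 5]) (3 * N + 10 - 5 * v ^ 2)) : IsMixedSum N := by
  obtain ⟨t, ht⟩ := exists_three_mul_octagonal_eq hv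
  obtain ⟨x, y, u, hxyu, hu⟩ := exists_not_three_dvd_of_represents hodd (by omega) h
  obtain ⟨z, hz⟩ := exists_three_mul_octagonal_eq hu
  obtain ⟨a, b, hab⟩ := exists_eq_three_mul_sq_add_two_mul_sq (x := x) (y := y) (by omega)
  exact ⟨a, b, z, t, by linarith⟩

theorem isMixedSum_of_not_five_dvd {N : ℤ} (hN : 4 ≤ N) (h5 : ¬ 5 ∣ N) : IsMixedSum N := by
  obtain ⟨v, hv, hodd⟩ : ∃ v : ℤ, (v = 1 ∨ v = 2) ∧ (3 * N + 10 - 5 * v ^ 2) % 2 = 1 := by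
    obtain h | h : N % 2 = 0 ∨ N % 2 = 1 := by omega
    · exact ⟨1, by simp, by omega⟩
    · exact ⟨2, by simp, by omega⟩
  have hsq : v ^ 2 ≤ 4 := by rcases hv with rfl | rfl <;> norm_num
  exact isMixedSum_of_represents (v := v) (by omega) (Int.odd_iff.2 hodd)
    (represents_diagonal_of_not_five_dvd (by omega) (Int.odd_iff.2 hodd) (by omega))

theorem exists_sub_sq_odd_emod_five (w : ℤ) :
    ∃ v : ℤ, ¬ 3 ∣ v ∧ v ^ 2 ≤ 100 ∧ Odd (w - v ^ 2) ∧
      ((w - v ^ 2) % 5 = 1 ∨ (w - v ^ 2) % 5 = 4) := by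
  simp only [Int.odd_iff]
  obtain h | h | h | h | h | h | h | h | h | h : w % 10 = 0 ∨ w % 10 = 1 ∨ w % 10 = 2 ∨
    w % 10 = 3 ∨ w % 10 = 4 ∨ w % 10 = 5 ∨ w % 10 = 6 ∨ w % 10 = 7 ∨ w % 10 = 8 ∨ w % 10 = 9 := by
    omega
  · exact ⟨1, by omega⟩
  · exact ⟨10, by omega⟩
  · exact ⟨1, by omega⟩
  · exact ⟨2, by omega⟩
  · exact ⟨5, by omega⟩
  · exact ⟨2, by omega⟩
  · exact ⟨5, by omega⟩
  · exact ⟨4, by omega⟩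
  · exact ⟨7, by omega⟩
  · exact ⟨10, by omega⟩

theorem isMixedSum_five_mul {m : ℤ} (hm : 33 ≤ m) : IsMixedSum (5 * m) := by
  obtain ⟨v, hv, hsq, hodd, h5⟩ := exists_sub_sq_odd_emod_five (3 * m + 2)
  have heq : 3 * (5 * m) + 10 - 5 * v ^ 2 = 5 * (3 * m + 2 - v ^ 2) := by ring
  refine isMixedSum_of_represents hv ?_ ?_ <;> rw [heq]
  · exact Odd.mul ⟨2, rfl⟩ hodd
  · exact represents_diagonal_five_mul (by omega) hodd h5

theorem exists_bounded_solution_of_lt : ∀ N ∈ Finset.range 165, N ≠ 15 → N ≠ 20 →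
    ∃ x ∈ Finset.range 14, ∃ y ∈ Finset.range 10, ∃ z ∈ Finset.Icc (-3 : ℤ) 3,
      ∃ t ∈ Finset.Icc (-3 : ℤ) 3, x ^ 2 + 2 * y ^ 2 + 5 * octagonal z + 5 * octagonal t = N := by
  decide +kernel

theorem octagonal_eq_or_five_le (z : ℤ) : octagonal z = 0 ∨ octagonal z = 1 ∨ 5 ≤ octagonal z := by
  unfold octagonal
  obtain h | rfl | rfl | h : z ≤ -1 ∨ z = 0 ∨ z = 1 ∨ 2 ≤ z := by omega
  · exact .inr (.inr (by nlinarith))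
  · simp
  · simp
  · exact .inr (.inr (by nlinarith))

theorem twenty_five_dvd_sq_add_two_mul_sq {x y : ℤ} (h : 5 ∣ x ^ 2 + 2 * y ^ 2) :
    25 ∣ x ^ 2 + 2 * y ^ 2 := by
  have : Fact (Nat.Prime 5) := ⟨Nat.prime_five⟩
  have hsq : ¬ IsSquare (-2 : ZMod 5) :=
    mod_cast not_isSquare_neg_intCast_zmod_five (m := 2) (.inl rfl)
  have hcast : 2 * (y : ZMod 5) ^ 2 + (x : ZMod 5) ^ 2 = 0 := by
    rw [add_comm]
    exact_mod_cast (ZMod.intCast_zmod_eq_zero_iff_dvd _ 5).2 h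
  obtain ⟨hy, hx⟩ := eq_zero_of_mul_sq_add_sq_eq_zero hsq hcast
  obtain ⟨x, rfl⟩ := (ZMod.intCast_zmod_eq_zero_iff_dvd _ 5).1 hx
  obtain ⟨y, rfl⟩ := (ZMod.intCast_zmod_eq_zero_iff_dvd _ 5).1 hy
  exact ⟨x ^ 2 + 2 * y ^ 2, by push_cast; ring⟩

theorem IsMixedSum.ne_fifteen_and_ne_twenty {N : ℤ} (h : IsMixedSum N) : N ≠ 15 ∧ N ≠ 20 := by
  obtain ⟨x, y, z, t, hN⟩ := h
  have hbinary := twenty_five_dvd_sq_add_two_mul_sq (x := x) (y := y)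
  have hnonneg : 0 ≤ x ^ 2 + 2 * y ^ 2 := by positivity
  have hz := octagonal_eq_or_five_le z
  have ht := octagonal_eq_or_five_le t
  omega

theorem isMixedSum_of_ne {N : ℤ} (hN : 0 ≤ N) (h15 : N ≠ 15) (h20 : N ≠ 20) : IsMixedSum N := by
  obtain hlt | hge := lt_or_ge N 165
  · lift N to ℕ using hN
    obtain ⟨x, -, y, -, z, -, t, -, h⟩ := exists_bounded_solution_of_lt N
      (Finset.mem_range.2 (by omega)) (by omega) (by omega)
    exact ⟨x, y, z, t, h⟩
  · by_cases h5 : 5 ∣ N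
    · obtain ⟨m, rfl⟩ := h5
      exact isMixedSum_five_mul (by omega)
    · exact isMixedSum_of_not_five_dvd (by omega) h5

end MixedSums

theorem exceptions_1_2_5_5 :
    ∀ N : ℤ, 0 ≤ N →
      ((∃ x y z t : ℤ,
          x ^ 2 + 2 * y ^ 2 + 5 * (3 * z ^ 2 - 2 * z) +
            5 * (3 * t ^ 2 - 2 * t) = N) ↔ N ≠ 15 ∧ N ≠ 20) := by
  intro N hN
  change IsMixedSum N ↔ N ≠ 15 ∧ N ≠ 20
  exact ⟨IsMixedSum.ne_fifteen_and_ne_twenty, fun ⟨h15, h20⟩ ↦ isMixedSum_of_ne hN h15 h20⟩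
end

section
/- The quaternary mixed sum x² + 2y² + 5(3z² − 2z) + 10(3t² − 2t) represents a nonnegative integer N if and only if N is not of the form r·25^s − 5 with integers 1 ≤ r ≤ 4 and s ≥ 1. That is, the set of nonnegative integers not represented by x²+2y²+5P₈(z)+10P₈(t) is exactly {r·25^s − 5 : 1 ≤ r ≤ 4, s ≥ 1}. -/
/-!
Completing squares in `z` and `t` and dividing `(3z - 1) + (3t - 1)√-2` by `1 + √-2` shows that
`N` is represented if and only if `N + 5 = A + 5B` with `A` and `B > 0` norms from `ℤ[√-2]`.
Since `-2` is not a square modulo `5`, a norm divisible by `5` is `25` times a norm, so the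
property is invariant under multiplying `N + 5` by `25`. It fails below `5`, which produces the
exceptions; it remains to show that it holds for every `M ≥ 5` not divisible by `25`.

Multiplication by the norm `2`, and exchanging the roles of `A` and `B` when `5 ∣ M`, reduce this
to the fact that every odd `n` prime to `5` is of the form `x² + 2y² + 5z²`. By Dirichlet's theorem
and quadratic reciprocity, `n` is represented by some positive definite ternary form of determinant
`10` whose zeros modulo `5` form a subgroup; Hermite reduction shows that the only such form
representing odd numbers is, up to equivalence, `x² + 2y² + 5z²`.
-/

/-- The integral ternary quadratic form `a x² + b y² + c z² + 2d xy + 2e xz + 2f yz`. -/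
structure TernaryForm where
  a : ℤ
  b : ℤ
  c : ℤ
  d : ℤ
  e : ℤ
  f : ℤ

namespace TernaryForm

/-- The value of a ternary form at an integral vector. -/
def eval (Q : TernaryForm) (v : Fin 3 → ℤ) : ℤ :=
  Q.a * v 0 ^ 2 + Q.b * v 1 ^ 2 + Q.c * v 2 ^ 2 +
    2 * Q.d * v 0 * v 1 + 2 * Q.e * v 0 * v 2 + 2 * Q.f * v 1 * v 2

/-- The determinant of the Gram matrix of a ternary form. -/
def disc (Q : TernaryForm) : ℤ :=
  Q.a * Q.b * Q.c + 2 * Q.d * Q.e * Q.f - Q.a * Q.f ^ 2 - Q.b * Q.e ^ 2 - Q.c * Q.d ^ 2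

/-- The `y²` coefficient of the binary form
`a Q(x, y, z) - (a x + d y + e z)² = projYY y² + 2 projYZ yz + projZZ z²`
obtained by projecting away from the first basis vector. -/
def projYY (Q : TernaryForm) : ℤ := Q.a * Q.b - Q.d ^ 2

/-- Half the `yz` coefficient of the projected binary form, see `TernaryForm.projYY`. -/
def projYZ (Q : TernaryForm) : ℤ := Q.a * Q.f - Q.d * Q.e

/-- The `z²` coefficient of the projected binary form, see `TernaryForm.projYY`. -/
def projZZ (Q : TernaryForm) : ℤ := Q.a * Q.c - Q.e ^ 2

/-- Positive definiteness, encoded by Sylvester's criterion on the leading minors. -/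
structure PosDef (Q : TernaryForm) : Prop where
  a_pos : 0 < Q.a
  projYY_pos : 0 < Q.projYY
  disc_pos : 0 < Q.disc

/-- The substitution `x ↦ x + k y`. -/
def shear (k : ℤ) (Q : TernaryForm) : TernaryForm :=
  ⟨Q.a, Q.b + 2 * k * Q.d + k ^ 2 * Q.a, Q.c, Q.d + k * Q.a, Q.e, Q.f + k * Q.e⟩

/-- The substitution exchanging `x` and `y`. -/
def swapXY (Q : TernaryForm) : TernaryForm := ⟨Q.b, Q.a, Q.c, Q.d, Q.f, Q.e⟩

/-- The substitution exchanging `y` and `z`. -/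
def swapYZ (Q : TernaryForm) : TernaryForm := ⟨Q.a, Q.c, Q.b, Q.e, Q.d, Q.f⟩

/-- The substitution `x ↦ x + k z`. -/
def shearXZ (k : ℤ) (Q : TernaryForm) : TernaryForm := (Q.swapYZ.shear k).swapYZ

/-- The substitution `y ↦ y + k z`. -/
def shearYZ (k : ℤ) (Q : TernaryForm) : TernaryForm :=
  (Q.swapXY.swapYZ.shear k).swapYZ.swapXY

/-- Integral equivalence of ternary forms, encoded by the elementary substitutions that generate
`GL₃(ℤ)`. -/
inductive Equivalent (Q : TernaryForm) : TernaryForm → Prop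
  | refl : Equivalent Q Q
  | shear (k : ℤ) {Q' : TernaryForm} : Equivalent Q Q' → Equivalent Q (Q'.shear k)
  | swapXY {Q' : TernaryForm} : Equivalent Q Q' → Equivalent Q Q'.swapXY
  | swapYZ {Q' : TernaryForm} : Equivalent Q Q' → Equivalent Q Q'.swapYZ

/-- Reducedness: Hermite's inequalities, asking the first coefficient and the projected binary form
to be small. -/
structure IsReduced (Q : TernaryForm) : Prop where
  a_le_b : Q.a ≤ Q.b
  two_mul_abs_d_le : 2 * |Q.d| ≤ Q.a
  two_mul_abs_e_le : 2 * |Q.e| ≤ Q.a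
  two_mul_abs_projYZ_le : 2 * |Q.projYZ| ≤ Q.projYY
  projYY_le_projZZ : Q.projYY ≤ Q.projZZ

/-- The zeros of `Q` modulo `m` form a subgroup. For an odd prime `m` this says that `Q` modulo `m`
is anisotropic modulo its radical; it separates `x² + 2y² + 5z²` from the other odd forms of
determinant `10`. -/
def AdditiveZerosMod (m : ℤ) (Q : TernaryForm) : Prop :=
  ∀ v w, m ∣ Q.eval v → m ∣ Q.eval w → m ∣ Q.eval (v + w)

variable {Q Q' : TernaryForm}

theorem projYY_mul_projZZ (Q : TernaryForm) :
    Q.projYY * Q.projZZ = Q.a * Q.disc + Q.projYZ ^ 2 := by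
  simp only [projYY, projZZ, projYZ, disc]
  ring

namespace PosDef

theorem b_pos (hQ : Q.PosDef) : 0 < Q.b := by
  have hab : 0 < Q.a * Q.b := by
    have := hQ.projYY_pos
    rw [projYY] at this
    linarith [sq_nonneg Q.d]
  exact pos_of_mul_pos_right hab hQ.a_pos.le

theorem projZZ_pos (hQ : Q.PosDef) : 0 < Q.projZZ := by
  have hprod : 0 < Q.projYY * Q.projZZ := by
    rw [projYY_mul_projZZ]
    have := mul_pos hQ.a_pos hQ.disc_pos
    positivity
  exact pos_of_mul_pos_right hprod hQ.projYY_pos.le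

end PosDef

@[simp] theorem disc_shear (k : ℤ) (Q : TernaryForm) : (Q.shear k).disc = Q.disc := by
  simp only [disc, shear]
  ring

@[simp] theorem disc_swapXY (Q : TernaryForm) : Q.swapXY.disc = Q.disc := by
  simp only [disc, swapXY]
  ring

@[simp] theorem disc_swapYZ (Q : TernaryForm) : Q.swapYZ.disc = Q.disc := by
  simp only [disc, swapYZ]
  ring

@[simp] theorem projYY_shear (k : ℤ) (Q : TernaryForm) : (Q.shear k).projYY = Q.projYY := by
  simp only [projYY, shear]
  ring

@[simp] theorem projYY_swapXY (Q : TernaryForm) : Q.swapXY.projYY = Q.projYY := by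
  simp only [projYY, swapXY]
  ring

@[simp] theorem projYZ_shear (k : ℤ) (Q : TernaryForm) : (Q.shear k).projYZ = Q.projYZ := by
  simp only [projYZ, shear]
  ring

@[simp] theorem projYY_shearXZ (k : ℤ) (Q : TernaryForm) : (Q.shearXZ k).projYY = Q.projYY := rfl

@[simp] theorem projYZ_shearXZ (k : ℤ) (Q : TernaryForm) : (Q.shearXZ k).projYZ = Q.projYZ := by
  simp only [projYZ, shearXZ, shear, swapYZ]
  ring

@[simp] theorem projYY_shearYZ (k : ℤ) (Q : TernaryForm) : (Q.shearYZ k).projYY = Q.projYY := rfl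

@[simp] theorem projYZ_shearYZ (k : ℤ) (Q : TernaryForm) :
    (Q.shearYZ k).projYZ = Q.projYZ + k * Q.projYY := by
  simp only [projYZ, projYY, shearYZ, shear, swapXY, swapYZ]
  ring

@[simp] theorem projYY_swapYZ (Q : TernaryForm) : Q.swapYZ.projYY = Q.projZZ := rfl

/-- The automorphism `(x, y, z) ↦ (x + k y, y, z)` of `ℤ³`. -/
def shearLinearEquiv (k : ℤ) : (Fin 3 → ℤ) ≃ₗ[ℤ] (Fin 3 → ℤ) where
  toFun v := ![v 0 + k * v 1, v 1, v 2]
  invFun v := ![v 0 - k * v 1, v 1, v 2]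
  left_inv v := by ext i; fin_cases i <;> simp
  right_inv v := by ext i; fin_cases i <;> simp
  map_add' v w := by ext i; fin_cases i <;> simp [mul_add, add_add_add_comm]
  map_smul' r v := by ext i; fin_cases i <;> simp [mul_add, mul_left_comm]

theorem eval_shear (k : ℤ) (Q : TernaryForm) (v : Fin 3 → ℤ) :
    (Q.shear k).eval v = Q.eval (shearLinearEquiv k v) := by
  simp only [eval, shear, shearLinearEquiv, LinearEquiv.coe_mk, LinearMap.coe_mk, AddHom.coe_mk,
    Matrix.cons_val_zero, Matrix.cons_val_one, Matrix.cons_val]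
  ring

theorem eval_swapXY (Q : TernaryForm) (v : Fin 3 → ℤ) :
    Q.swapXY.eval v = Q.eval (LinearEquiv.funCongrLeft ℤ ℤ (Equiv.swap 0 1) v) := by
  simp only [eval, swapXY, LinearEquiv.funCongrLeft_apply, LinearMap.funLeft_apply,
    Equiv.swap_apply_def, Fin.reduceEq, reduceIte]
  ring

theorem eval_swapYZ (Q : TernaryForm) (v : Fin 3 → ℤ) :
    Q.swapYZ.eval v = Q.eval (LinearEquiv.funCongrLeft ℤ ℤ (Equiv.swap 1 2) v) := by
  simp only [eval, swapYZ, LinearEquiv.funCongrLeft_apply, LinearMap.funLeft_apply,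
    Equiv.swap_apply_def, Fin.reduceEq, reduceIte]
  ring

namespace Equivalent

theorem disc_eq (h : Q.Equivalent Q') : Q'.disc = Q.disc := by
  induction h with
  | refl => rfl
  | shear k _ ih => rw [disc_shear, ih]
  | swapXY _ ih => rw [disc_swapXY, ih]
  | swapYZ _ ih => rw [disc_swapYZ, ih]

theorem posDef (h : Q.Equivalent Q') (hQ : Q.PosDef) : Q'.PosDef := by
  induction h with
  | refl => exact hQ
  | shear k _ ih => exact ⟨ih.a_pos, by simpa using ih.projYY_pos, by simpa using ih.disc_pos⟩
  | swapXY _ ih => exact ⟨ih.b_pos, by simpa using ih.projYY_pos, by simpa using ih.disc_pos⟩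
  | swapYZ _ ih => exact ⟨ih.a_pos, ih.projZZ_pos, by simpa using ih.disc_pos⟩

theorem exists_linearEquiv (h : Q.Equivalent Q') :
    ∃ φ : (Fin 3 → ℤ) ≃ₗ[ℤ] (Fin 3 → ℤ), ∀ v, Q'.eval v = Q.eval (φ v) := by
  induction h with
  | refl => exact ⟨LinearEquiv.refl ℤ _, fun _ => rfl⟩
  | shear k _ ih =>
    obtain ⟨φ, hφ⟩ := ih
    exact ⟨shearLinearEquiv k ≪≫ₗ φ, fun v => by rw [eval_shear, hφ]; rfl⟩
  | swapXY _ ih =>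
    obtain ⟨φ, hφ⟩ := ih
    exact ⟨LinearEquiv.funCongrLeft ℤ ℤ (Equiv.swap 0 1) ≪≫ₗ φ,
      fun v => by rw [eval_swapXY, hφ]; rfl⟩
  | swapYZ _ ih =>
    obtain ⟨φ, hφ⟩ := ih
    exact ⟨LinearEquiv.funCongrLeft ℤ ℤ (Equiv.swap 1 2) ≪≫ₗ φ,
      fun v => by rw [eval_swapYZ, hφ]; rfl⟩

theorem range_eval_eq (h : Q.Equivalent Q') : Set.range Q'.eval = Set.range Q.eval := by
  obtain ⟨φ, hφ⟩ := h.exists_linearEquiv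
  rw [show Q'.eval = Q.eval ∘ φ from funext hφ, φ.surjective.range_comp]

theorem additiveZerosMod {m : ℤ} (h : Q.Equivalent Q') (hQ : Q.AdditiveZerosMod m) :
    Q'.AdditiveZerosMod m := by
  obtain ⟨φ, hφ⟩ := h.exists_linearEquiv
  intro v w hv hw
  rw [hφ] at hv hw ⊢
  rw [map_add]
  exact hQ _ _ hv hw

theorem shearXZ (k : ℤ) (h : Q.Equivalent Q') : Q.Equivalent (Q'.shearXZ k) :=
  ((h.swapYZ).shear k).swapYZ

theorem shearYZ (k : ℤ) (h : Q.Equivalent Q') : Q.Equivalent (Q'.shearYZ k) :=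
  (((h.swapXY.swapYZ).shear k).swapYZ).swapXY

end Equivalent

/-! ### Hermite reduction -/

theorem exists_two_mul_abs_add_mul_le {m : ℤ} (hm : 0 < m) (s : ℤ) :
    ∃ k : ℤ, 2 * |s + k * m| ≤ m := by
  lift m to ℕ using hm.le
  have hm : 0 < m := by exact_mod_cast hm
  have hbmod : s + -s.bdiv m * m = s.bmod m := by linarith [Int.bmod_add_bdiv s m]
  have hlower := Int.le_bmod (x := s) hm
  have hupper := Int.bmod_lt (x := s) hm
  exact ⟨-s.bdiv m, by rw [hbmod, Int.abs_eq_natAbs]; omega⟩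

theorem exists_equivalent_minimal (hQ : Q.PosDef) :
    ∃ Q₁, Q.Equivalent Q₁ ∧ ∀ Q₂, Q.Equivalent Q₂ →
      Q₁.a ≤ Q₂.a ∧ (Q₂.a = Q₁.a → Q₁.projYY ≤ Q₂.projYY) := by
  obtain ⟨Q₁, h₁, hmin⟩ := exists_minimalFor_of_wellFoundedLT Q.Equivalent
    (fun Q' => toLex (Q'.a.toNat, Q'.projYY.toNat)) ⟨Q, .refl⟩
  refine ⟨Q₁, h₁, fun Q₂ h₂ => ?_⟩
  have hle := not_lt.1 fun hlt => hlt.not_ge (hmin h₂ hlt.le)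
  rw [Prod.Lex.toLex_le_toLex] at hle
  have ha := (h₂.posDef hQ).a_pos
  have hproj := (h₂.posDef hQ).projYY_pos
  omega

theorem exists_equivalent_isReduced (hQ : Q.PosDef) :
    ∃ Q', Q.Equivalent Q' ∧ Q'.IsReduced := by
  obtain ⟨Q₁, h₁, hmin⟩ := exists_equivalent_minimal hQ
  have ha := (h₁.posDef hQ).a_pos
  obtain ⟨k, hk⟩ := exists_two_mul_abs_add_mul_le (h₁.posDef hQ).projYY_pos Q₁.projYZ
  obtain ⟨l, hl⟩ := exists_two_mul_abs_add_mul_le ha (Q₁.shearYZ k).d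
  obtain ⟨m, hm⟩ := exists_two_mul_abs_add_mul_le ha ((Q₁.shearYZ k).shear l).e
  have h : Q.Equivalent (((Q₁.shearYZ k).shear l).shearXZ m) := ((h₁.shearYZ k).shear l).shearXZ m
  refine ⟨_, h, (hmin _ h.swapXY).1, hl, hm, ?_, ?_⟩
  · simpa using hk
  · simpa using (hmin _ h.swapYZ).2 rfl

theorem IsReduced.three_mul_projYY_sq_le (hred : Q.IsReduced) (hQ : Q.PosDef) :
    3 * Q.projYY ^ 2 ≤ 4 * (Q.a * Q.disc) := by
  have hYZ : (2 * |Q.projYZ|) ^ 2 ≤ Q.projYY ^ 2 := by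
    gcongr
    exact hred.two_mul_abs_projYZ_le
  rw [mul_pow, sq_abs] at hYZ
  have hprod := mul_le_mul_of_nonneg_left hred.projYY_le_projZZ hQ.projYY_pos.le
  rw [projYY_mul_projZZ] at hprod
  linarith

theorem IsReduced.three_mul_a_sq_le (hred : Q.IsReduced) (hQ : Q.PosDef) :
    3 * Q.a ^ 2 ≤ 4 * Q.projYY := by
  have hd : (2 * |Q.d|) ^ 2 ≤ Q.a ^ 2 := by
    gcongr
    exact hred.two_mul_abs_d_le
  rw [mul_pow, sq_abs] at hd
  have hab := mul_le_mul_of_nonneg_left hred.a_le_b hQ.a_pos.le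
  rw [projYY]
  linarith

/-! ### Forms of determinant `10` -/

theorem IsReduced.cases_of_a_eq_one (hred : Q.IsReduced) (hQ : Q.PosDef) (hdisc : Q.disc = 10)
    (ha : Q.a = 1) : Q = ⟨1, 2, 5, 0, 0, 0⟩ ∨ (Q.b = 1 ∧ Q.d = 0) := by
  have hd : Q.d = 0 := by grind [hred.two_mul_abs_d_le]
  have he : Q.e = 0 := by grind [hred.two_mul_abs_e_le]
  have hYY := hred.three_mul_projYY_sq_le hQ
  have hYZ := hred.two_mul_abs_projYZ_le
  obtain ⟨a, b, c, d, e, f⟩ := Q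
  have hb : a ≤ b := hred.a_le_b
  subst ha hd he
  rw [hdisc] at hYY
  simp only [disc, projYY, projYZ] at *
  ring_nf at hdisc hYY hYZ
  have hb3 : b ≤ 3 := by nlinarith
  obtain ⟨hf, hf'⟩ : -1 ≤ f ∧ f ≤ 1 := by grind
  simp only [mk.injEq, true_and, and_true]
  interval_cases b <;> interval_cases f <;> omega

theorem IsReduced.cases_of_a_eq_two (hred : Q.IsReduced) (hQ : Q.PosDef) (hdisc : Q.disc = 10)
    (ha : Q.a = 2) : (Q.b = 2 ∧ Q.d = 0) ∨ (2 ∣ Q.b ∧ 2 ∣ Q.c) := by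
  have hYY : Q.projYY = 2 * Q.b - Q.d ^ 2 := by rw [projYY, ha]
  have hZZ : Q.projZZ = 2 * Q.c - Q.e ^ 2 := by rw [projZZ, ha]
  have hYY_le : Q.projYY ≤ 5 := by
    have := hred.three_mul_projYY_sq_le hQ
    rw [hdisc, ha] at this
    nlinarith
  have hb := hred.a_le_b
  have hprod := Q.projYY_mul_projZZ
  have hYZ := hred.two_mul_abs_projYZ_le
  rw [hdisc, ha] at hprod
  obtain hd | hd : Q.d = 0 ∨ Q.d ^ 2 = 1 := by grind [hred.two_mul_abs_d_le]
  · rw [hd] at hYY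
    exact .inl ⟨by omega, hd⟩
  obtain hb | hb : Q.b = 2 ∨ Q.b = 3 := by omega
  · have hYY3 : Q.projYY = 3 := by omega
    have hYZsq : Q.projYZ ^ 2 = 0 ∨ Q.projYZ ^ 2 = 1 := by
      grind [Int.abs_le_one_iff.1 (show |Q.projYZ| ≤ 1 by omega)]
    have hesq : Q.e ^ 2 = 0 ∨ Q.e ^ 2 = 1 := by
      grind [hred.two_mul_abs_e_le, Int.abs_le_one_iff (a := Q.e)]
    rw [hYY3] at hprod
    exact .inr ⟨by omega, by omega⟩
  · have hYY5 : Q.projYY = 5 := by omega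
    have hYZsq : Q.projYZ ^ 2 = 0 ∨ Q.projYZ ^ 2 = 1 ∨ Q.projYZ ^ 2 = 4 := by
      obtain ⟨hlower, hupper⟩ := abs_le.1 (show |Q.projYZ| ≤ 2 by omega)
      interval_cases Q.projYZ <;> norm_num
    have hle := hred.projYY_le_projZZ
    rw [hYY5] at hprod
    omega

theorem IsReduced.cases_of_disc_eq_ten (hred : Q.IsReduced) (hQ : Q.PosDef)
    (hdisc : Q.disc = 10) :
    Q = ⟨1, 2, 5, 0, 0, 0⟩ ∨ (Q.a ≤ 2 ∧ Q.b = Q.a ∧ Q.d = 0) ∨ (2 ∣ Q.a ∧ 2 ∣ Q.b ∧ 2 ∣ Q.c) := by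
  have ha_sq := hred.three_mul_a_sq_le hQ
  have hYY_sq := hred.three_mul_projYY_sq_le hQ
  rw [hdisc] at hYY_sq
  have ha_pos := hQ.a_pos
  have ha_le : Q.a ≤ 2 := by
    by_contra! ha
    have : 9 * Q.a ≤ 4 * Q.projYY := by nlinarith
    nlinarith
  obtain ha | ha : Q.a = 1 ∨ Q.a = 2 := by omega
  · have := hred.cases_of_a_eq_one hQ hdisc ha
    grind
  · have := hred.cases_of_a_eq_two hQ hdisc ha
    grind

theorem AdditiveZerosMod.five_dvd_a (hQ : Q.AdditiveZerosMod 5) (hab : Q.b = Q.a) (hd : Q.d = 0) :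
    5 ∣ Q.a := by
  have heval (x y : ℤ) : Q.eval ![x, y, 0] = Q.a * (x ^ 2 + y ^ 2) := by
    simp only [eval, hab, hd, Matrix.cons_val_zero, Matrix.cons_val_one, Matrix.cons_val]
    ring
  have hsum := hQ ![1, 2, 0] ![1, -2, 0] (by rw [heval]; omega) (by rw [heval]; omega)
  rw [Matrix.cons_add_cons, Matrix.cons_add_cons, Matrix.cons_add_cons, Matrix.empty_add_empty,
    add_zero, heval] at hsum
  omega

theorem AdditiveZerosMod.of_legendreSym_eq_neg_one {p : ℕ} [Fact p.Prime] {r k : ℤ}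
    (hr : legendreSym p r = -1) (hk : ¬ (p : ℤ) ∣ k) (l m : Fin 3 → ℤ)
    (h : ∀ v, k * Q.eval v ≡ (l ⬝ᵥ v) ^ 2 - r * (m ⬝ᵥ v) ^ 2 [ZMOD p]) :
    Q.AdditiveZerosMod p := by
  have hp : Prime (p : ℤ) := Nat.prime_iff_prime_int.1 Fact.out
  have hzero (v : Fin 3 → ℤ) : (p : ℤ) ∣ Q.eval v ↔ (p : ℤ) ∣ l ⬝ᵥ v ∧ (p : ℤ) ∣ m ⬝ᵥ v := by
    rw [← hp.dvd_mul.trans (or_iff_right hk), (h v).dvd_iff]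
    refine ⟨legendreSym.prime_dvd_of_eq_neg_one hr, fun ⟨hl, hm⟩ => ?_⟩
    exact dvd_sub (dvd_pow hl two_ne_zero) ((dvd_pow hm two_ne_zero).mul_left r)
  intro v w hv hw
  rw [hzero] at hv hw ⊢
  rw [dotProduct_add, dotProduct_add]
  exact ⟨dvd_add hv.1 hw.1, dvd_add hv.2 hw.2⟩

theorem PosDef.exists_eq_sq_add_two_mul_sq_add_five_mul_sq (hQ : Q.PosDef) (hdisc : Q.disc = 10)
    (hzeros : Q.AdditiveZerosMod 5) {n : ℤ} (hn : Odd n) (hrep : n ∈ Set.range Q.eval) :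
    ∃ x y z : ℤ, n = x ^ 2 + 2 * y ^ 2 + 5 * z ^ 2 := by
  obtain ⟨Q', hequiv, hred⟩ := exists_equivalent_isReduced hQ
  have hQ' := hequiv.posDef hQ
  rw [← hequiv.range_eval_eq] at hrep
  obtain ⟨v, rfl⟩ := hrep
  obtain rfl | ⟨ha, hb, hd⟩ | ⟨ha, hb, hc⟩ :=
    hred.cases_of_disc_eq_ten hQ' (hequiv.disc_eq.trans hdisc)
  · exact ⟨v 0, v 1, v 2, by simp [eval]⟩
  · have := (hequiv.additiveZerosMod hzeros).five_dvd_a hb hd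
    have := hQ'.a_pos
    omega
  · have heven : 2 ∣ Q'.eval v := by
      simp only [eval, mul_assoc]
      have hsq : 2 ∣ Q'.a * v 0 ^ 2 + Q'.b * v 1 ^ 2 + Q'.c * v 2 ^ 2 :=
        dvd_add (dvd_add (ha.mul_right _) (hb.mul_right _)) (hc.mul_right _)
      omega
    exact absurd heven (Int.two_dvd_ne_zero.2 (Int.odd_iff.1 hn))

/-- The form `a x² + q y² + n z² + 2d xy + 2xz`, which takes the value `n` at `(0, 0, 1)`. When
`q a = b + d²` and `n b = q + D` it has leading minors `a`, `b`, `D`. -/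
def bordered (a q n d : ℤ) : TernaryForm := ⟨a, q, n, d, 1, 0⟩

section Bordered

variable {a b d n q D : ℤ}

theorem projYY_bordered (ha : q * a = b + d ^ 2) : (bordered a q n d).projYY = b := by
  simp only [projYY, bordered]
  linear_combination ha

theorem disc_bordered (ha : q * a = b + d ^ 2) (hb : n * b = q + D) :
    (bordered a q n d).disc = D := by
  simp only [disc, bordered]
  linear_combination n * ha + hb

theorem posDef_bordered (hq : 0 < q) (hb_pos : 0 < b) (hD : 0 < D) (ha : q * a = b + d ^ 2)
    (hb : n * b = q + D) : (bordered a q n d).PosDef where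
  a_pos := pos_of_mul_pos_right (show 0 < q * a by rw [ha]; positivity) hq.le
  projYY_pos := by rwa [projYY_bordered ha]
  disc_pos := by rwa [disc_bordered ha hb]

theorem additiveZerosMod_bordered {p : ℕ} [Fact p.Prime] (hp : legendreSym p (-b) = -1)
    (hn : ¬ (p : ℤ) ∣ n) (hD : (p : ℤ) ∣ D) (ha : q * a = b + d ^ 2) (hb : n * b = q + D) :
    (bordered a q n d).AdditiveZerosMod p := by
  have hprime : Prime (p : ℤ) := Nat.prime_iff_prime_int.1 Fact.out
  have hpb : ¬ (p : ℤ) ∣ b := by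
    rw [← Int.dvd_neg, ← ZMod.intCast_zmod_eq_zero_iff_dvd, ← legendreSym.eq_zero_iff, hp]
    norm_num
  have hpq : ¬ (p : ℤ) ∣ q := by
    rw [← dvd_add_left hD, ← hb]
    exact hprime.not_dvd_mul hn hpb
  refine .of_legendreSym_eq_neg_one hp (hprime.not_dvd_mul hpb hpq) ![b, 0, q] ![d, q, 0]
    fun v => ?_
  rw [Int.modEq_comm, Int.modEq_iff_dvd]
  have hsquares : b * q * (bordered a q n d).eval v - ((![b, 0, q] ⬝ᵥ v) ^ 2 -
      -b * (![d, q, 0] ⬝ᵥ v) ^ 2) = D * (q * v 2 ^ 2) := by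
    simp only [eval, bordered, Matrix.vec3_dotProduct, Matrix.cons_val_zero, Matrix.cons_val_one,
      Matrix.cons_val]
    linear_combination b * v 0 ^ 2 * ha + q * v 2 ^ 2 * hb
  rw [hsquares]
  exact hD.mul_right _

end Bordered

end TernaryForm

/-! ### Odd numbers prime to `5` as `x² + 2y² + 5z²` -/

open NumberTheorySymbols

theorem exists_prime_mul_eq_add {m n : ℕ} (hm : m ≠ 0) (hn : n ≠ 0) (k r : ℕ)
    (hcop : IsCoprime ((n : ℤ) * r - k) (m * n)) :
    ∃ b q : ℕ, q.Prime ∧ n * b = q + k ∧ b ≡ r [MOD m] := by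
  obtain ⟨q, -, hq, hmod⟩ := Nat.forall_exists_prime_gt_and_zmodEq 0 (mul_ne_zero hm hn)
    (a := (n : ℤ) * r - k) (by rwa [Nat.cast_mul])
  obtain ⟨t, ht⟩ := hmod.symm.dvd
  have hb : (n : ℤ) * (r + m * t) = q + k := by push_cast at ht; linarith
  have hb_nonneg : 0 ≤ (r + m * t : ℤ) := by
    refine nonneg_of_mul_nonneg_right (a := (n : ℤ)) ?_ (by positivity)
    rw [hb]
    positivity
  obtain ⟨b, hbt⟩ := Int.eq_ofNat_of_zero_le hb_nonneg
  refine ⟨b, q, hq, by rw [hbt] at hb; exact_mod_cast hb, ?_⟩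
  rw [← Int.natCast_modEq_iff, ← hbt, Int.modEq_comm, Int.modEq_iff_dvd]
  exact ⟨t, by ring⟩

theorem isCoprime_mul_sub_pow_mul {k n r : ℤ} (hn : IsCoprime k n) (hr : IsCoprime k r) (j : ℕ) :
    IsCoprime (n * r - k) (k ^ j * n) := by
  have hk : IsCoprime (n * r - k) k := by
    simpa [sub_eq_add_neg] using ((hn.mul_right hr).symm).add_mul_left_left (-1)
  have hn' : IsCoprime (n * r - k) n := by
    simpa [sub_eq_add_neg, add_comm] using (hn.neg_left).add_mul_left_left r
  exact hk.pow_right.mul_right hn'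

theorem jacobiSym_neg_eq_one_of_mul_eq_add_ten {n b q : ℕ} (h : n * b = q + 10)
    (hnb : n % 4 = 1 ∧ b % 40 = 17 ∨ n % 4 = 3 ∧ b % 40 = 13) : J(-b | q) = 1 := by
  have hb4 : b % 4 = 1 := by omega
  have hq4 : (q + 10) % 4 = n % 4 := by rw [← h, Nat.mul_mod, hb4]; simp
  have hq : Odd q := Nat.odd_iff.2 (by omega)
  have hb : Odd b := Nat.odd_iff.2 (by omega)
  have hmod : J(q | b) = J(-10 | b) := by
    refine jacobiSym.mod_left' ((Int.modEq_iff_dvd).2 ⟨-n, ?_⟩)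
    have : (n : ℤ) * b = q + 10 := by exact_mod_cast h
    linarith
  rw [jacobiSym.neg _ hq, jacobiSym.quadratic_reciprocity_one_mod_four hb4 hq, hmod,
    jacobiSym.mod_right _ hb]
  rcases hnb with ⟨hn, hb40⟩ | ⟨hn, hb40⟩
  · rw [show b % (4 * (-10 : ℤ).natAbs) = 17 from hb40, ZMod.χ₄_nat_three_mod_four (by omega)]
    norm_num
  · rw [show b % (4 * (-10 : ℤ).natAbs) = 13 from hb40, ZMod.χ₄_nat_one_mod_four (by omega)]
    norm_num

theorem exists_prime_mul_eq_add_ten {n : ℕ} (hn2 : Odd n) (hn5 : ¬ 5 ∣ n) :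
    ∃ b q : ℕ, q.Prime ∧ n * b = q + 10 ∧ (b % 5 = 2 ∨ b % 5 = 3) ∧ J(-b | q) = 1 := by
  have hcop {k : ℕ} (hk2 : Odd k) (hk5 : ¬ 5 ∣ k) : IsCoprime ((10 : ℕ) : ℤ) k :=
    Nat.isCoprime_iff_coprime.2 <| Nat.Coprime.mul_left (n := 5) (m := 2)
      (Nat.coprime_two_left.2 hk2) ((Nat.Prime.coprime_iff_not_dvd Nat.prime_five).2 hk5)
  -- The residue of `b` modulo `40` has to make `J(-10 | b)` agree with `χ₄ q`, where
  -- `q ≡ n + 2 [MOD 4]`, while `b ≡ 1 [MOD 4]` and `-b` is a nonresidue modulo `5`.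
  obtain ⟨r, hr⟩ : ∃ r, n % 4 = 1 ∧ r = 17 ∨ n % 4 = 3 ∧ r = 13 := by grind
  have hr10 : IsCoprime ((10 : ℕ) : ℤ) r :=
    hcop (Nat.odd_iff.2 (by omega)) (by omega)
  have hcop40 : IsCoprime ((n : ℤ) * r - (10 : ℕ)) ((40 : ℕ) * n) :=
    (isCoprime_mul_sub_pow_mul (hcop hn2 hn5) hr10 3).of_isCoprime_of_dvd_right
      (mul_dvd_mul_right (by norm_num) _)
  obtain ⟨b, q, hq, hb, hmod⟩ := exists_prime_mul_eq_add (by norm_num) hn2.pos.ne' 10 r hcop40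
  have hb40 : b % 40 = r % 40 := hmod
  exact ⟨b, q, hq, hb, by omega, jacobiSym_neg_eq_one_of_mul_eq_add_ten hb (by omega)⟩

instance fact_prime_five : Fact (Nat.Prime 5) := ⟨Nat.prime_five⟩

theorem legendreSym_five_neg_eq_neg_one {b : ℤ} (hb : b % 5 = 2 ∨ b % 5 = 3) :
    legendreSym 5 (-b) = -1 := by
  rw [legendreSym.mod]
  obtain h | h : -b % 5 = 3 ∨ -b % 5 = 2 := by omega
  all_goals
    rw [Nat.cast_ofNat, h]
    norm_num

theorem exists_eq_sq_add_two_mul_sq_add_five_mul_sq_of_odd {n : ℕ} (hn2 : Odd n) (hn5 : ¬ 5 ∣ n) :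
    ∃ x y z : ℤ, (n : ℤ) = x ^ 2 + 2 * y ^ 2 + 5 * z ^ 2 := by
  obtain ⟨b, q, hq, hb, hb5, hJ⟩ := exists_prime_mul_eq_add_ten hn2 hn5
  have : Fact q.Prime := ⟨hq⟩
  obtain ⟨w, hw⟩ := ZMod.isSquare_of_jacobiSym_eq_one hJ
  obtain ⟨d, rfl⟩ := ZMod.intCast_surjective w
  obtain ⟨a, ha⟩ : (q : ℤ) ∣ b + d ^ 2 := by
    rw [← ZMod.intCast_zmod_eq_zero_iff_dvd]
    push_cast at hw ⊢
    linear_combination -hw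
  have hbz : (n : ℤ) * b = q + 10 := by exact_mod_cast hb
  have hb_pos : 0 < (b : ℤ) := by omega
  refine (TernaryForm.posDef_bordered (by exact_mod_cast hq.pos) hb_pos (by norm_num) ha.symm hbz)
    |>.exists_eq_sq_add_two_mul_sq_add_five_mul_sq (TernaryForm.disc_bordered ha.symm hbz) ?_
      (by exact_mod_cast hn2) ⟨![0, 0, 1], by simp [TernaryForm.eval, TernaryForm.bordered]⟩
  exact TernaryForm.additiveZerosMod_bordered (p := 5) (legendreSym_five_neg_eq_neg_one (by omega))
    (by omega) (by norm_num) ha.symm hbz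

/-! ### Values of `x² + 2y²` and octagonal numbers -/

/-- `A` is a value of the binary form `x² + 2y²`, the norm form of `ℤ[√-2]`. -/
def IsSqAddTwoSq (A : ℤ) : Prop := ∃ x y : ℤ, A = x ^ 2 + 2 * y ^ 2

namespace IsSqAddTwoSq

variable {A B : ℤ}

theorem nonneg (hA : IsSqAddTwoSq A) : 0 ≤ A := by
  obtain ⟨x, y, rfl⟩ := hA
  positivity

theorem mul (hA : IsSqAddTwoSq A) (hB : IsSqAddTwoSq B) : IsSqAddTwoSq (A * B) := by
  obtain ⟨x, y, rfl⟩ := hA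
  obtain ⟨u, v, rfl⟩ := hB
  exact ⟨x * u - 2 * y * v, x * v + y * u, by ring⟩

theorem exists_eq_mul_of_five_dvd (hA : IsSqAddTwoSq A) (h5 : 5 ∣ A) :
    ∃ B, IsSqAddTwoSq B ∧ A = 25 * B := by
  obtain ⟨x, y, rfl⟩ := hA
  obtain ⟨⟨x, rfl⟩, ⟨y, rfl⟩⟩ := legendreSym.prime_dvd_of_eq_neg_one (p := 5) (x := x) (y := y)
    (legendreSym_five_neg_eq_neg_one (b := 2) (by norm_num))
    (by simpa only [Nat.cast_ofNat, neg_mul, sub_neg_eq_add] using h5)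
  exact ⟨x ^ 2 + 2 * y ^ 2, ⟨x, y, rfl⟩, by push_cast; ring⟩

theorem exists_not_three_dvd {B : ℕ} (hB : IsSqAddTwoSq B) (hpos : 0 < B) :
    ∃ u v : ℤ, (B : ℤ) = u ^ 2 + 2 * v ^ 2 ∧ ¬ (3 ∣ u ∧ 3 ∣ v) := by
  induction B using Nat.strong_induction_on with
  | _ B ih =>
  obtain ⟨u, v, hB⟩ := hB
  by_cases h3 : 3 ∣ u ∧ 3 ∣ v
  · obtain ⟨⟨u, rfl⟩, ⟨v, rfl⟩⟩ := h3
    have hB9 : (B : ℤ) = 9 * (u ^ 2 + 2 * v ^ 2) := by linarith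
    obtain ⟨a, b, hab, h3⟩ := ih (B / 9) (by omega) ⟨u, v, by omega⟩ (by omega)
    have hB9' : (B : ℤ) = 9 * (a ^ 2 + 2 * b ^ 2) := by omega
    -- Multiply `a + b√-2` by `(1 + √-2)²` or by its conjugate, elements of norm `9`.
    by_cases hs : 3 ∣ a + b
    · exact ⟨-a + 4 * b, 2 * a + b, by rw [hB9']; ring, by omega⟩
    · exact ⟨-a - 4 * b, 2 * a - b, by rw [hB9']; ring, by omega⟩
  · exact ⟨u, v, hB, h3⟩

theorem exists_three_mul_eq (hB : IsSqAddTwoSq B) (hpos : 0 < B) :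
    ∃ a b : ℤ, ¬ 3 ∣ a ∧ ¬ 3 ∣ b ∧ 3 * B = a ^ 2 + 2 * b ^ 2 := by
  lift B to ℕ using hpos.le
  obtain ⟨u, v, hB, h3⟩ := hB.exists_not_three_dvd (by exact_mod_cast hpos)
  rw [hB]
  by_cases hs : 3 ∣ u + v
  · exact ⟨u + 2 * v, v - u, by omega, by omega, by ring⟩
  · exact ⟨u - 2 * v, v + u, by omega, by omega, by ring⟩

end IsSqAddTwoSq

theorem exists_sq_eq_three_mul_sub_one_sq {a : ℤ} (ha : ¬ 3 ∣ a) :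
    ∃ z : ℤ, a ^ 2 = (3 * z - 1) ^ 2 := by
  obtain ⟨z, rfl | rfl⟩ : ∃ z, a = 3 * z - 1 ∨ a = -(3 * z - 1) := by
    obtain h | h : a % 3 = 1 ∨ a % 3 = 2 := by omega
    · exact ⟨-(a / 3), .inr (by omega)⟩
    · exact ⟨(a + 1) / 3, .inl (by omega)⟩
  · exact ⟨z, rfl⟩
  · exact ⟨z, neg_sq _⟩

theorem exists_octagonal_add_two_mul_octagonal_iff (B : ℤ) :
    (∃ z t : ℤ, 3 * z ^ 2 - 2 * z + 2 * (3 * t ^ 2 - 2 * t) = B - 1) ↔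
      IsSqAddTwoSq B ∧ 0 < B := by
  constructor
  · rintro ⟨z, t, h⟩
    -- `(3z - 1) + (3t - 1)√-2` divided by `1 + √-2`.
    have hB : B = (z + 2 * t - 1) ^ 2 + 2 * (t - z) ^ 2 := by linarith
    refine ⟨⟨_, _, hB⟩, ?_⟩
    by_contra! hneg
    have h₁ : z + 2 * t - 1 = 0 := by nlinarith
    have h₂ : t - z = 0 := by nlinarith
    omega
  · rintro ⟨hB, hpos⟩
    obtain ⟨a, b, ha, hb, hab⟩ := hB.exists_three_mul_eq hpos
    obtain ⟨z, hz⟩ := exists_sq_eq_three_mul_sub_one_sq ha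
    obtain ⟨t, ht⟩ := exists_sq_eq_three_mul_sub_one_sq hb
    rw [hz, ht] at hab
    exact ⟨z, t, by linarith⟩

/-! ### The mixed sum -/

/-- `M = A + 5B` with `A` and `B > 0` values of `x² + 2y²`. These are the numbers `N + 5` with `N`
represented by `x² + 2y² + 5P₈(z) + 10P₈(t)`. -/
def IsShiftedMixedSum (M : ℤ) : Prop :=
  ∃ A B : ℤ, IsSqAddTwoSq A ∧ IsSqAddTwoSq B ∧ 0 < B ∧ M = A + 5 * B

theorem exists_mixedSum_eq_iff (N : ℤ) :
    (∃ x y z t : ℤ, x ^ 2 + 2 * y ^ 2 + 5 * (3 * z ^ 2 - 2 * z) + 10 * (3 * t ^ 2 - 2 * t) = N) ↔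
      IsShiftedMixedSum (N + 5) := by
  constructor
  · rintro ⟨x, y, z, t, rfl⟩
    obtain ⟨hB, hpos⟩ := (exists_octagonal_add_two_mul_octagonal_iff _).1
      ⟨z, t, (add_sub_cancel_right _ 1).symm⟩
    exact ⟨_, _, ⟨x, y, rfl⟩, hB, hpos, by ring⟩
  · rintro ⟨_, B, ⟨x, y, rfl⟩, hB, hpos, h⟩
    obtain ⟨z, t, hzt⟩ := (exists_octagonal_add_two_mul_octagonal_iff B).2 ⟨hB, hpos⟩
    exact ⟨x, y, z, t, by linarith⟩

namespace IsShiftedMixedSum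

variable {M k : ℤ}

theorem five_le (hM : IsShiftedMixedSum M) : 5 ≤ M := by
  obtain ⟨A, B, hA, -, hpos, rfl⟩ := hM
  have := hA.nonneg
  omega

theorem mul_left (hM : IsShiftedMixedSum M) (hk : IsSqAddTwoSq k) (hpos : 0 < k) :
    IsShiftedMixedSum (k * M) := by
  obtain ⟨A, B, hA, hB, hBpos, rfl⟩ := hM
  exact ⟨k * A, k * B, hk.mul hA, hk.mul hB, mul_pos hpos hBpos, by ring⟩

theorem of_mul_twentyfive (hM : IsShiftedMixedSum (25 * M)) : IsShiftedMixedSum M := by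
  obtain ⟨A, B, hA, hB, hBpos, h⟩ := hM
  obtain ⟨A', hA', rfl⟩ := hA.exists_eq_mul_of_five_dvd (by omega)
  obtain ⟨B', hB', rfl⟩ := hB.exists_eq_mul_of_five_dvd (by omega)
  exact ⟨A', B', hA', hB', by omega, by omega⟩

theorem pow_mul_iff (s : ℕ) : IsShiftedMixedSum (25 ^ s * M) ↔ IsShiftedMixedSum M := by
  induction s with
  | zero => simp
  | succ s ih =>
    rw [pow_succ', mul_assoc, ← ih]
    exact ⟨of_mul_twentyfive, fun h => h.mul_left ⟨5, 0, by norm_num⟩ (by norm_num)⟩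

theorem of_odd {M : ℕ} (hM : Odd M) (h5 : ¬ 5 ∣ M) (h : 6 ≤ M) : IsShiftedMixedSum M := by
  by_cases h10 : 10 ≤ M
  · obtain ⟨m, rfl⟩ := Nat.exists_eq_add_of_le' h10
    obtain ⟨x, y, z, hm⟩ := exists_eq_sq_add_two_mul_sq_add_five_mul_sq_of_odd (n := m)
      (by grind) (by omega)
    refine ⟨_, _, ⟨x, y, rfl⟩, ⟨z, 1, rfl⟩, by positivity, ?_⟩
    push_cast
    linarith
  · obtain rfl | rfl : M = 7 ∨ M = 9 := by grind
    · exact ⟨2, 1, ⟨0, 1, by norm_num⟩, ⟨1, 0, by norm_num⟩, by norm_num, by norm_num⟩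
    · exact ⟨4, 1, ⟨2, 0, by norm_num⟩, ⟨1, 0, by norm_num⟩, by norm_num, by norm_num⟩

theorem of_not_five_dvd {M : ℕ} (h5 : ¬ 5 ∣ M) (h : 6 ≤ M) : IsShiftedMixedSum M := by
  induction M using Nat.strong_induction_on with
  | _ M ih =>
  obtain ⟨m, rfl | rfl⟩ := Nat.even_or_odd' M
  · by_cases hm : 6 ≤ m
    · have hdouble := (ih m (by omega) (by omega) hm).mul_left ⟨0, 1, by norm_num⟩ two_pos
      exact_mod_cast hdouble
    · obtain rfl | rfl : m = 3 ∨ m = 4 := by omega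
      · exact ⟨1, 1, ⟨1, 0, by norm_num⟩, ⟨1, 0, by norm_num⟩, by norm_num, by norm_num⟩
      · exact ⟨3, 1, ⟨1, 1, by norm_num⟩, ⟨1, 0, by norm_num⟩, by norm_num, by norm_num⟩
  · exact of_odd (odd_two_mul_add_one m) h5 h

end IsShiftedMixedSum

theorem exists_isSqAddTwoSq_add_five_mul {m : ℕ} (h5 : ¬ 5 ∣ m) :
    ∃ A B : ℤ, IsSqAddTwoSq A ∧ IsSqAddTwoSq B ∧ (m : ℤ) = A + 5 * B := by
  by_cases hm : 6 ≤ m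
  · obtain ⟨A, B, hA, hB, -, h⟩ := IsShiftedMixedSum.of_not_five_dvd h5 hm
    exact ⟨A, B, hA, hB, h⟩
  · refine ⟨m, 0, ?_, ⟨0, 0, by norm_num⟩, by ring⟩
    obtain rfl | rfl | rfl | rfl : m = 1 ∨ m = 2 ∨ m = 3 ∨ m = 4 := by omega
    · exact ⟨1, 0, by norm_num⟩
    · exact ⟨0, 1, by norm_num⟩
    · exact ⟨1, 1, by norm_num⟩
    · exact ⟨2, 0, by norm_num⟩

theorem IsShiftedMixedSum.of_not_twentyfive_dvd {M : ℕ} (h25 : ¬ 25 ∣ M) (h : 5 ≤ M) :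
    IsShiftedMixedSum M := by
  by_cases h5 : 5 ∣ M
  · obtain ⟨m, rfl⟩ := h5
    obtain ⟨A, B, hA, hB, hm⟩ := exists_isSqAddTwoSq_add_five_mul (m := m) (by omega)
    have hA_nonneg := hA.nonneg
    exact ⟨25 * B, A, .mul ⟨5, 0, by norm_num⟩ hB, hA, by omega, by omega⟩
  · exact .of_not_five_dvd h5 (by omega)

theorem exceptions_1_2_5_10 :
    ∀ N : ℤ, 0 ≤ N →
      ((∃ x y z t : ℤ,
          x ^ 2 + 2 * y ^ 2 + 5 * (3 * z ^ 2 - 2 * z) +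
            10 * (3 * t ^ 2 - 2 * t) = N) ↔
        ¬ ∃ (r : ℤ) (s : ℕ), 1 ≤ r ∧ r ≤ 4 ∧ 1 ≤ s ∧
          N = r * 25 ^ s - 5) := by
  intro N hN
  rw [exists_mixedSum_eq_iff]
  constructor
  · rintro h ⟨r, s, -, hr, -, rfl⟩
    rw [sub_add_cancel, mul_comm, IsShiftedMixedSum.pow_mul_iff] at h
    have := h.five_le
    omega
  · intro hN_not_exception
    lift N to ℕ using hN
    obtain ⟨s, m, h25, hNm⟩ := Nat.exists_eq_pow_mul_and_not_dvd (n := N + 5) (by omega) 25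
      (by norm_num)
    have hNm' : (N : ℤ) + 5 = 25 ^ s * m := by exact_mod_cast hNm
    rw [hNm', IsShiftedMixedSum.pow_mul_iff]
    refine .of_not_twentyfive_dvd h25 ?_
    by_contra! hm
    have hs : s ≠ 0 := by rintro rfl; omega
    exact hN_not_exception ⟨m, s, by omega, by omega, by omega, by linarith⟩
end
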